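/- arXiv:2407.21456 — 2 statements merged into one kernel-verified Lean document; each statement's English description precedes it below -/
import Mathlib

section
/- Under assumptions (A1)–(A3), the order-9 U-statistic ζ̂*_n = ((n)₉)^{-1} Σ_{(i₁,…,i₉) distinct} φ_n((X_{i₁},Y_{i₁},Z_{i₁}),…,(X_{i₉},Y_{i₉},Z_{i₉})), where (n)₉ = n(n−1)⋯(n−8), converges in probability, as n → ∞, to ζ*(X,Y|Z) = E[Θ²(P_{X|Y,Z}, P_{X|Z}) p_{Y,Z}(Y,Z)⁴ p_Z(Z)⁴]. -/
open MeasureTheory ProbabilityTheory Filter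
open scoped ENNReal NNReal Topology

noncomputable section

/-- `ℝ^d` with the Euclidean norm. -/
abbrev Euc (d : ℕ) : Type := EuclideanSpace ℝ (Fin d)

/-- The ball divergence `Θ²(P, Q)` between two Borel measures on `ℝ^d`:
`∫∫ ((P - Q)(B̄(u, ‖v - u‖)))² [dP(u)dP(v) + dQ(u)dQ(v)]`. -/
def ballDiv {d : ℕ} (P Q : Measure (Euc d)) : ℝ :=
  (∫ u, ∫ v, ((P (Metric.closedBall u (dist v u))).toReal
      - (Q (Metric.closedBall u (dist v u))).toReal) ^ 2 ∂P ∂P)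
  + (∫ u, ∫ v, ((P (Metric.closedBall u (dist v u))).toReal
      - (Q (Metric.closedBall u (dist v u))).toReal) ^ 2 ∂Q ∂Q)

/-- Assumption (A2): the kernel `K` is bounded, nonnegative, symmetric about zero, compactly
supported, integrates (as `u ↦ K ‖u‖` on `ℝ^d`) to one and has a scalar second moment matrix. -/
def KernelAssumption (K : ℝ → ℝ) (d : ℕ) : Prop :=
  (∀ t, 0 ≤ K t) ∧ (∃ C : ℝ, ∀ t, K t ≤ C) ∧ (∀ t, K (-t) = K t) ∧
  (∃ R : ℝ, 0 < R ∧ ∀ t : ℝ, R < |t| → K t = 0) ∧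
  (∫ u : Euc d, K ‖u‖) = 1 ∧
  (∃ τ : ℝ, 0 < τ ∧ ∀ i j : Fin d,
    (∫ u : Euc d, u i * u j * K ‖u‖) = if i = j then τ else 0)

/-- Assumption (A3) on the bandwidth sequences `h₁, h₂`. -/
def BandwidthAssumption (dY dZ : ℕ) (h1 h2 : ℕ → ℝ) : Prop :=
  (∀ n, 0 < h1 n) ∧ (∀ n, 0 < h2 n) ∧
  Tendsto (fun n => h1 n ^ (dY + dZ) / h2 n ^ dZ) atTop (𝓝 0) ∧
  Tendsto (fun n : ℕ => (n : ℝ) * h1 n ^ (dY + dZ)) atTop atTop ∧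
  Tendsto (fun n : ℕ => (n : ℝ) * h2 n ^ dZ) atTop atTop ∧
  Tendsto (fun n : ℕ => (n : ℝ) * h1 n ^ (dY + dZ + 4)) atTop (𝓝 0) ∧
  Tendsto (fun n : ℕ => (n : ℝ) * h2 n ^ (dZ + 4)) atTop (𝓝 0)

/-- The remainder `R(x, y; u)` in the definition of a *nice* density, at step size `δ`. -/
def niceRem {α β : Type*} [NormedAddCommGroup β] [NormedSpace ℝ β]
    (f : α → β → ℝ) (δ : ℝ) (x : α) (y u : β) : ℝ :=
  (δ ^ 2)⁻¹ * (f x (y + δ • u) / f x y - 1 - δ * (fderiv ℝ (f x) y u / f x y))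

/-- A joint density `f(x, y)` is *nice with respect to its second argument* if for every sequence
`δ_n → 0`, `sup_{‖u‖ = 1} limsup_n ∫ R_n(x, y; u)² f(x, y) dx` is uniformly bounded in `y`. -/
def NiceWrt {α β : Type*} [MeasureSpace α] [NormedAddCommGroup β] [NormedSpace ℝ β]
    (f : α → β → ℝ) : Prop :=
  ∀ δ : ℕ → ℝ, (∀ n, δ n ≠ 0) → Tendsto δ atTop (𝓝 0) →
    ∃ C : ℝ, ∀ y u : β, ‖u‖ = 1 →
      Filter.limsup (fun n => ∫ x, (niceRem f (δ n) x y u) ^ 2 * f x y) atTop ≤ C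

/-- The `(Y, Z)`-marginal density `p_{Y,Z}`. -/
def margYZ {dX dY dZ : ℕ} (p : Euc dX → Euc dY → Euc dZ → ℝ) (y : Euc dY) (z : Euc dZ) : ℝ :=
  ∫ x, p x y z

/-- The `Z`-marginal density `p_Z`. -/
def margZ {dX dY dZ : ℕ} (p : Euc dX → Euc dY → Euc dZ → ℝ) (z : Euc dZ) : ℝ :=
  ∫ x, ∫ y, p x y z

/-- Assumption (A1): `p_{X,Z}` is nice with respect to `Z`, `p_{X,Y,Z}` is nice with respect to
`(Y,Z)` (equipped with the Euclidean/`L²` product norm), and `p_{X,Y,Z}` and all its marginals are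
uniformly bounded. -/
def A1 {dX dY dZ : ℕ} (p : Euc dX → Euc dY → Euc dZ → ℝ) : Prop :=
  NiceWrt (fun (x : Euc dX) (z : Euc dZ) => ∫ y, p x y z) ∧
  NiceWrt (fun (x : Euc dX) (w : WithLp 2 (Euc dY × Euc dZ)) =>
    p x (WithLp.equiv 2 (Euc dY × Euc dZ) w).1 (WithLp.equiv 2 (Euc dY × Euc dZ) w).2) ∧
  (∃ C : ℝ, (∀ x y z, p x y z ≤ C) ∧
    (∀ y z, (∫ x, p x y z) ≤ C) ∧ (∀ x z, (∫ y, p x y z) ≤ C) ∧ (∀ x y, (∫ z, p x y z) ≤ C) ∧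
    (∀ x : Euc dX, (∫ y, ∫ z, p x y z) ≤ C) ∧ (∀ y : Euc dY, (∫ x, ∫ z, p x y z) ≤ C) ∧
    (∀ z : Euc dZ, (∫ x, ∫ y, p x y z) ≤ C))

/-- The kernel weight `w_{(y', z')}(y, z) = K(‖(y,z) - (y',z')‖ / h₁)`, with the Euclidean norm on
the concatenated vector. -/
def wYZ {dY dZ : ℕ} (K : ℝ → ℝ) (h1 : ℝ) (y y' : Euc dY) (z z' : Euc dZ) : ℝ :=
  K (Real.sqrt (dist y y' ^ 2 + dist z z' ^ 2) / h1)

/-- The estimated conditional distribution `P̃_{X | Y = y, Z = z}` from `n` sample points. -/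
def condEstYZ {dX dY dZ : ℕ} (K : ℝ → ℝ) (h1 : ℝ) (n : ℕ)
    (Xs : ℕ → Euc dX) (Ys : ℕ → Euc dY) (Zs : ℕ → Euc dZ)
    (y : Euc dY) (z : Euc dZ) : Measure (Euc dX) :=
  (∑ i ∈ Finset.range n, ENNReal.ofReal (wYZ K h1 y (Ys i) z (Zs i)))⁻¹ •
    ∑ i ∈ Finset.range n, ENNReal.ofReal (wYZ K h1 y (Ys i) z (Zs i)) • Measure.dirac (Xs i)

/-- The estimated conditional distribution `P̃_{X | Z = z}` from `n` sample points. -/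
def condEstZ {dX dZ : ℕ} (K : ℝ → ℝ) (h2 : ℝ) (n : ℕ)
    (Xs : ℕ → Euc dX) (Zs : ℕ → Euc dZ) (z : Euc dZ) : Measure (Euc dX) :=
  (∑ i ∈ Finset.range n, ENNReal.ofReal (K (dist z (Zs i) / h2)))⁻¹ •
    ∑ i ∈ Finset.range n, ENNReal.ofReal (K (dist z (Zs i) / h2)) • Measure.dirac (Xs i)

/-- The regular conditional distribution `P_{X | Y = y, Z = z}`, given by the density
`x ↦ p(x,y,z) / p_{Y,Z}(y,z)`. -/
def condAtYZ {dX dY dZ : ℕ} (p : Euc dX → Euc dY → Euc dZ → ℝ)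
    (y : Euc dY) (z : Euc dZ) : Measure (Euc dX) :=
  volume.withDensity fun x => ENNReal.ofReal (p x y z / margYZ p y z)

/-- The regular conditional distribution `P_{X | Z = z}`, given by the density
`x ↦ p_{X,Z}(x,z) / p_Z(z)`. -/
def condAtZ {dX dY dZ : ℕ} (p : Euc dX → Euc dY → Euc dZ → ℝ) (z : Euc dZ) : Measure (Euc dX) :=
  volume.withDensity fun x => ENNReal.ofReal ((∫ y, p x y z) / margZ p z)

/-- `δ(x, y, z) = 1{‖x - z‖ ≤ ‖x - y‖}`. -/
def ballδ {d : ℕ} (x y z : Euc d) : ℝ := if dist x z ≤ dist x y then 1 else 0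

/-- `η(x, y, z, z') = δ(x,y,z) δ(x,y,z')`. -/
def ballη {d : ℕ} (x y z z' : Euc d) : ℝ := ballδ x y z * ballδ x y z'

/-- `φ_A`, one half of the ball divergence core function. -/
def ballφA {d : ℕ} (u1 u2 u3 u4 v3 v4 : Euc d) : ℝ :=
  ballη u1 u2 u3 u4 + ballη u1 u2 v3 v4 - ballη u1 u2 u3 v3 - ballη u1 u2 u4 v4

/-- The ball divergence core function `φ` of degree `(4, 4)`. -/
def ballφ {d : ℕ} (u v : Fin 4 → Euc d) : ℝ :=
  ballφA (u 0) (u 1) (u 2) (u 3) (v 2) (v 3) + ballφA (v 0) (v 1) (v 2) (v 3) (u 2) (u 3)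

/-- The symmetrized ball divergence core function `φ'`. -/
def ballφ' {d : ℕ} (u v : Fin 4 → Euc d) : ℝ :=
  ((Nat.factorial 4 * Nat.factorial 4 : ℕ) : ℝ)⁻¹ *
    ∑ τ : Equiv.Perm (Fin 4), ∑ σ : Equiv.Perm (Fin 4), ballφ (u ∘ τ) (v ∘ σ)


/-- The core function `φ_n` of the order-9 U-statistic: kernel weights relative to the first
coordinate times the symmetrized ball divergence core applied to the remaining eight points. -/
def ustatCore {dX dY dZ : ℕ} (K : ℝ → ℝ) (h1 h2 : ℝ)
    (v : Fin 9 → Euc dX × Euc dY × Euc dZ) : ℝ :=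
  (h1 ^ (4 * (dY + dZ)))⁻¹ * (h2 ^ (4 * dZ))⁻¹ *
    ((∏ l : Fin 4, wYZ K h1 (v 0).2.1 ((v ⟨l.val + 1, by have := l.isLt; omega⟩).2.1)
        (v 0).2.2 ((v ⟨l.val + 1, by have := l.isLt; omega⟩).2.2)) *
      (∏ l : Fin 4, K (dist (v 0).2.2 ((v ⟨l.val + 5, by have := l.isLt; omega⟩).2.2) / h2)) *
      ballφ' (fun k : Fin 4 => (v ⟨k.val + 1, by have := k.isLt; omega⟩).1)
        (fun k : Fin 4 => (v ⟨k.val + 5, by have := k.isLt; omega⟩).1))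

/-- The order-9 U-statistic `ζ̂*_n`, averaging the core `φ_n` over all 9-tuples of distinct
sample indices. -/
def ustat {dX dY dZ : ℕ} {Ω : Type} (K : ℝ → ℝ) (h1 h2 : ℝ) (n : ℕ)
    (Xs : ℕ → Ω → Euc dX) (Ys : ℕ → Ω → Euc dY) (Zs : ℕ → Ω → Euc dZ) (ω : Ω) : ℝ :=
  ((n.descFactorial 9 : ℕ) : ℝ)⁻¹ *
    ∑ i ∈ Finset.univ.filter (fun i : Fin 9 → Fin n => Function.Injective i),
      ustatCore K h1 h2 (fun k => (Xs (i k) ω, Ys (i k) ω, Zs (i k) ω))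

/-!
Conditioning on the first point turns the statistic into an average, over that point, of
U-statistics of degree 8 whose kernels are products of weights concentrated near it times the
bounded `φ'`. Such a kernel is dominated by a product of functions that have bounded mass and
supremum `M = O(h⁻ᵈ)`. Two disjoint tuples are uncorrelated, and each index shared by two tuples
costs at most a factor `M`, so the variance is `O(M / n)`, which tends to zero because `n hᵈ → ∞`.
What remains is the mean: an integral of `φ'` against smoothed densities, which converge in `L¹`
to `p(·, y, z)` and `p_{X,Z}(·, z)`. Dividing these limits by their masses `p_{Y,Z}(y, z)` and
`p_Z(z)` gives the conditional laws of `X`, for which `φ'` is an unbiased estimator of the ball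
divergence; the masses account for the factor `p_{Y,Z}⁴ p_Z⁴`. The law of large numbers for the
first point concludes.
-/

open scoped BigOperators Finset

theorem lintegral_pi_fin_prod {n : ℕ} {E : Fin n → Type*} [∀ i, MeasurableSpace (E i)]
    (ν : ∀ i, Measure (E i)) [∀ i, SigmaFinite (ν i)] {g : ∀ i, E i → ℝ≥0∞}
    (hg : ∀ i, Measurable (g i)) :
    ∫⁻ v, ∏ i, g i (v i) ∂Measure.pi ν = ∏ i, ∫⁻ x, g i x ∂ν i := by
  induction n with
  | zero => simp
  | succ n ih =>
    have split (v : ∀ i, E i) : ∏ i, g i (v i) = g 0 (v 0) * ∏ i, g i.succ (Fin.tail v i) :=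
      Fin.prod_univ_succ _
    have mp := measurePreserving_piFinSuccAbove ν 0
    calc ∫⁻ v, ∏ i, g i (v i) ∂Measure.pi ν
        = ∫⁻ q, g 0 q.1 * ∏ i, g i.succ (q.2 i)
            ∂(ν 0).prod (Measure.pi fun i : Fin n => ν i.succ) := by
          simp only [split]
          exact mp.lintegral_comp_emb (MeasurableEquiv.measurableEmbedding _)
            fun q => g 0 q.1 * ∏ i : Fin n, g i.succ (q.2 i)
      _ = ∏ i, ∫⁻ x, g i x ∂ν i := by
          rw [lintegral_prod_mul (g := fun w : ∀ i : Fin n, E i.succ => ∏ i, g i.succ (w i))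
            (hg 0).aemeasurable (Finset.measurable_prod _ fun i _ =>
              (hg i.succ).comp (measurable_pi_apply i)).aemeasurable,
            ih _ fun i => hg i.succ, Fin.prod_univ_succ]

theorem lintegral_pi_prod {ι : Type*} [Fintype ι] {E : ι → Type*} [∀ i, MeasurableSpace (E i)]
    (ν : ∀ i, Measure (E i)) [∀ i, SigmaFinite (ν i)] {g : ∀ i, E i → ℝ≥0∞}
    (hg : ∀ i, Measurable (g i)) :
    ∫⁻ v, ∏ i, g i (v i) ∂Measure.pi ν = ∏ i, ∫⁻ x, g i x ∂ν i := by
  let e := (Fintype.equivFin ι).symm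
  rw [← (measurePreserving_piCongrLeft ν e).lintegral_comp_emb
    (MeasurableEquiv.measurableEmbedding _), ← e.prod_comp,
    ← lintegral_pi_fin_prod (fun k => ν (e k)) fun k => hg (e k)]
  refine lintegral_congr fun v => ?_
  rw [← e.prod_comp]
  simp [MeasurableEquiv.coe_piCongrLeft, Equiv.piCongrLeft_apply_apply]

section ProductMeasure

variable {ι κ E : Type*} [Fintype ι] [Fintype κ] [MeasurableSpace E]

theorem measurePreserving_comp_injective (ν : κ → Measure E) [∀ k, IsProbabilityMeasure (ν k)]
    {i : ι → κ} (hi : Function.Injective i) :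
    MeasurePreserving (fun v : κ → E => v ∘ i) (Measure.pi ν) (Measure.pi (ν ∘ i)) := by
  refine ⟨by fun_prop, ?_⟩
  have indep := (iIndepFun_pi (μ := ν) (X := fun _ (x : E) => x)
    fun _ => aemeasurable_id).precomp hi
  calc (Measure.pi ν).map (fun v => v ∘ i)
      = Measure.pi fun l => (Measure.pi ν).map fun v => v (i l) :=
        (iIndepFun_iff_map_fun_eq_pi_map
          fun l => (measurable_pi_apply (i l)).aemeasurable).1 indep
    _ = Measure.pi (ν ∘ i) := by
        congr with l : 1
        exact (measurePreserving_eval ν (i l)).map_eq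

theorem lintegral_prod_comp_injective (P : Measure E) [IsProbabilityMeasure P]
    {g : ι → E → ℝ≥0∞} (hg : ∀ l, Measurable (g l)) {i : ι → κ} (hi : Function.Injective i) :
    ∫⁻ v, ∏ l, g l (v (i l)) ∂Measure.pi (fun _ : κ => P) = ∏ l, ∫⁻ x, g l x ∂P := by
  rw [← lintegral_pi_prod (fun _ => P) hg]
  exact (measurePreserving_comp_injective (fun _ : κ => P) hi).lintegral_comp
    (f := fun w => ∏ l, g l (w l)) (by fun_prop)

variable {P : Measure E} [IsProbabilityMeasure P] {g : ι → E → ℝ≥0∞} {C M : ℝ≥0∞}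

-- The coordinates of `j` outside the range of `i` are integrated out, the others are bounded.
open scoped Classical in
theorem lintegral_prod_mul_prod_le (hg : ∀ l, Measurable (g l)) (hgM : ∀ l x, g l x ≤ M)
    (hgC : ∀ l, ∫⁻ x, g l x ∂P ≤ C) {i j : ι → κ} (hi : Function.Injective i)
    (hj : Function.Injective j) :
    ∫⁻ v, (∏ l, g l (v (i l))) * ∏ l, g l (v (j l)) ∂Measure.pi (fun _ : κ => P)
      ≤ C ^ Fintype.card ι * ∏ l, if j l ∈ Set.range i then M else C := by
  let S := {l // j l ∉ Set.range i}
  let e : ι ⊕ S → κ := Sum.elim i fun l => j l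
  let G : ι ⊕ S → E → ℝ≥0∞ := Sum.elim g fun l => g l
  have he : Function.Injective e :=
    Sum.elim_injective.2 ⟨hi, hj.comp Subtype.val_injective, fun a b h => b.2 ⟨a, h⟩⟩
  have split (c : ι → ℝ≥0∞) :
      ∏ l, (if j l ∈ Set.range i then M else c l)
        = M ^ #{l | j l ∈ Set.range i} * ∏ l : S, c l := by
    rw [Finset.prod_ite, Finset.prod_const,
      Finset.prod_subtype (p := fun l => j l ∉ Set.range i) _ (by simp) c]
  have bound (v : κ → E) : (∏ l, g l (v (i l))) * ∏ l, g l (v (j l))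
      ≤ M ^ #{l | j l ∈ Set.range i} * ∏ l, G l (v (e l)) := by
    calc (∏ l, g l (v (i l))) * ∏ l, g l (v (j l))
        ≤ (∏ l, g l (v (i l))) * ∏ l, if j l ∈ Set.range i then M else g l (v (j l)) := by
          gcongr with l
          split_ifs
          exacts [hgM l _, le_rfl]
      _ = M ^ #{l | j l ∈ Set.range i} * ∏ l, G l (v (e l)) := by
          rw [split, Fintype.prod_sum_type]
          exact mul_left_comm _ _ _
  have hG : ∀ l, Measurable (G l) := Sum.rec hg fun l => hg l
  calc ∫⁻ v, (∏ l, g l (v (i l))) * ∏ l, g l (v (j l)) ∂Measure.pi (fun _ : κ => P)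
      ≤ ∫⁻ v, M ^ #{l | j l ∈ Set.range i} * ∏ l, G l (v (e l)) ∂Measure.pi (fun _ : κ => P) :=
        lintegral_mono bound
    _ = M ^ #{l | j l ∈ Set.range i} * ∏ l, ∫⁻ x, G l x ∂P := by
        rw [lintegral_const_mul _ (by fun_prop), lintegral_prod_comp_injective P hG he]
    _ ≤ M ^ #{l | j l ∈ Set.range i} * ∏ _l : ι ⊕ S, C := by
        gcongr with l
        exact Sum.rec hgC (fun l => hgC l) l
    _ = C ^ Fintype.card ι * ∏ l, if j l ∈ Set.range i then M else C := by
        rw [split, Fintype.prod_sum_type, Finset.prod_const, Finset.card_univ]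
        exact mul_left_comm _ _ _

end ProductMeasure

/-- The U-statistic with kernel `f` of the sample `v`: the average of `f` over all tuples of
distinct sample points. -/
def uStatistic {ι κ E : Type*} [Fintype ι] [Fintype κ] [DecidableEq ι] [DecidableEq κ]
    (f : (ι → E) → ℝ) (v : κ → E) : ℝ :=
  𝔼 i : ι ↪ κ, f (v ∘ i)

section Counting

variable {ι κ : Type*} [Fintype ι] [Fintype κ]

theorem sum_fun_prod_ite_eq {R : Type*} [CommSemiring R] [DecidableEq ι] (l₀ : ι) (a b : κ → R) :
    ∑ j : ι → κ, ∏ l, (if l = l₀ then a (j l) else b (j l))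
      = (∑ k, a k) * (∑ k, b k) ^ (Fintype.card ι - 1) := by
  calc ∑ j : ι → κ, ∏ l, (if l = l₀ then a (j l) else b (j l))
      = ∏ l, ∑ k, if l = l₀ then a k else b k :=
        (Fintype.prod_sum fun l k => if l = l₀ then a k else b k).symm
    _ = (∑ k, a k) * ∏ l ∈ Finset.univ.erase l₀, ∑ k, b k := by
        rw [← Finset.mul_prod_erase _ _ (Finset.mem_univ l₀)]
        simp only [if_pos]
        congr 1
        exact Finset.prod_congr rfl fun l hl => by simp only [if_neg (Finset.ne_of_mem_erase hl)]
    _ = (∑ k, a k) * (∑ k, b k) ^ (Fintype.card ι - 1) := by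
        rw [Finset.prod_const, Finset.card_erase_of_mem (Finset.mem_univ l₀), Finset.card_univ]

open scoped Classical in
theorem sum_embedding_le_sum_fun (F : (ι → κ) → ℝ≥0) : ∑ j : ι ↪ κ, F j ≤ ∑ j : ι → κ, F j := by
  calc ∑ j : ι ↪ κ, F j
      = ∑ j ∈ Finset.univ.map ⟨fun j : ι ↪ κ => (j : ι → κ), DFunLike.coe_injective⟩, F j :=
        (Finset.sum_map _ ⟨fun j : ι ↪ κ => (j : ι → κ), DFunLike.coe_injective⟩ F).symm
    _ ≤ ∑ j : ι → κ, F j := Finset.sum_le_univ_sum_of_nonneg fun _ => zero_le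

open scoped Classical in
theorem sum_prod_ite_mem_range_le (i : ι ↪ κ) (C M : ℝ≥0) :
    ∑ j ∈ Finset.univ.filter fun j : ι ↪ κ => ¬ Disjoint (Set.range i) (Set.range j),
        ∏ l, (if j l ∈ Set.range i then M else C)
      ≤ Fintype.card ι * (Fintype.card ι * M
        * (Fintype.card ι * M + Fintype.card κ * C) ^ (Fintype.card ι - 1)) := by
  let w (k : κ) : ℝ≥0 := if k ∈ Set.range i then M else C
  let w₀ (k : κ) : ℝ≥0 := if k ∈ Set.range i then M else 0
  have card_range : #{k | k ∈ Set.range i} = Fintype.card ι := by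
    rw [← Finset.card_univ, ← Finset.card_map i]
    congr 1
    ext
    simp
  have sum_w₀ : ∑ k, w₀ k = Fintype.card ι * M := by
    rw [Finset.sum_ite, Finset.sum_const, Finset.sum_const_zero, card_range, nsmul_eq_mul, add_zero]
  have sum_w : ∑ k, w k ≤ Fintype.card ι * M + Fintype.card κ * C := by
    rw [Finset.sum_ite, Finset.sum_const, Finset.sum_const, card_range, nsmul_eq_mul, nsmul_eq_mul]
    gcongr
    exact Finset.card_le_univ _
  -- A tuple `j` meeting the range of `i` does so at some coordinate `l₀`.
  have term_le (j : ι ↪ κ) (hj : ¬ Disjoint (Set.range i) (Set.range j)) :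
      ∏ l, w (j l) ≤ ∑ l₀, ∏ l, if l = l₀ then w₀ (j l) else w (j l) := by
    obtain ⟨_, hk, l₀, rfl⟩ := Set.not_disjoint_iff.1 hj
    refine le_trans (le_of_eq (Finset.prod_congr rfl fun l _ => ?_)) (Finset.single_le_sum
      (f := fun l₀ => ∏ l, if l = l₀ then w₀ (j l) else w (j l))
      (fun _ _ => zero_le) (Finset.mem_univ l₀))
    split_ifs with hl
    · simp only [w, w₀, hl, if_pos hk]
    · rfl
  calc ∑ j ∈ Finset.univ.filter fun j : ι ↪ κ => ¬ Disjoint (Set.range i) (Set.range j),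
        ∏ l, w (j l)
      ≤ ∑ j : ι ↪ κ, ∑ l₀, ∏ l, (if l = l₀ then w₀ (j l) else w (j l)) :=
        (Finset.sum_le_sum fun j hj => term_le j (Finset.mem_filter.1 hj).2).trans
          (Finset.sum_le_univ_sum_of_nonneg fun _ => zero_le)
    _ ≤ ∑ l₀, ∑ j : ι → κ, ∏ l, (if l = l₀ then w₀ (j l) else w (j l)) := by
        rw [Finset.sum_comm]
        exact Finset.sum_le_sum fun l₀ _ =>
          sum_embedding_le_sum_fun fun j => ∏ l, if l = l₀ then w₀ (j l) else w (j l)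
    _ = Fintype.card ι * ((∑ k, w₀ k) * (∑ k, w k) ^ (Fintype.card ι - 1)) := by
        simp only [sum_fun_prod_ite_eq, Finset.sum_const, nsmul_eq_mul, Finset.card_univ]
    _ ≤ _ := by rw [sum_w₀]; gcongr

theorem pow_le_pow_mul_descFactorial {r n : ℕ} (h : r ≤ n) :
    n ^ r ≤ r ^ r * n.descFactorial r := by
  rcases r.eq_zero_or_pos with rfl | hr
  · simp
  obtain ⟨m, rfl⟩ := Nat.exists_eq_add_of_le h
  calc (r + m) ^ r ≤ (r * (r + m + 1 - r)) ^ r := by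
        rw [show r + m + 1 - r = m + 1 by omega]
        gcongr
        nlinarith
    _ ≤ r ^ r * (r + m).descFactorial r := by
        rw [mul_pow]
        exact Nat.mul_le_mul_left _ (Nat.pow_sub_le_descFactorial _ r)

theorem mul_pow_div_descFactorial_le {r n : ℕ} (h : r ≤ n) (C M : ℝ≥0) :
    (r * (r * M * (r * M + n * C) ^ (r - 1)) : ℝ) / n.descFactorial r
      ≤ r ^ (r + 2) * (C + r * (M / n)) ^ (r - 1) * (M / n) := by
  rcases Nat.eq_zero_or_pos r with rfl | hr
  · simp
  have hn : (0 : ℝ) < n := by exact_mod_cast hr.trans_le h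
  have hr' : (0 : ℝ) < r := by exact_mod_cast hr
  have hD : (0 : ℝ) < n.descFactorial r := by exact_mod_cast Nat.descFactorial_pos.2 h
  have inv_le : (n.descFactorial r : ℝ)⁻¹ ≤ r ^ r / n ^ r := by
    rw [inv_le_comm₀ hD (by positivity), inv_div, div_le_iff₀ (by positivity), mul_comm]
    exact_mod_cast pow_le_pow_mul_descFactorial h
  have factor : (r * M + n * C : ℝ) = n * (C + r * (M / n)) := by field_simp; ring
  obtain ⟨s, rfl⟩ := Nat.exists_eq_add_of_le' hr
  calc _ ≤ ((s + 1 : ℕ) * ((s + 1 : ℕ) * M * ((s + 1 : ℕ) * M + n * C) ^ s) : ℝ)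
        * ((s + 1 : ℕ) ^ (s + 1) / n ^ (s + 1)) := by
        rw [div_eq_mul_inv]
        exact mul_le_mul_of_nonneg_left inv_le (by positivity)
    _ = _ := by
        rw [factor, mul_pow, Nat.add_sub_cancel]
        field_simp
        ring

end Counting

theorem uStatistic_eq {ι κ E : Type*} [Fintype ι] [Fintype κ] [DecidableEq ι] [DecidableEq κ]
    (f : (ι → E) → ℝ) (v : κ → E) :
    uStatistic f v = (Fintype.card (ι ↪ κ) : ℝ)⁻¹ * ∑ i : ι ↪ κ, f (v ∘ i) := by
  rw [uStatistic, Fintype.expect_eq_sum_div_card, div_eq_inv_mul]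

/-- The kernel `f` is dominated by a product of one-variable functions bounded by `M`, each with
`P`-integral at most `C`. For kernels localized at scale `h` in dimension `d`, the bound `M` is of
order `h⁻ᵈ` whereas `C` does not depend on `h`. -/
structure ProductDominated {ι E : Type*} [Fintype ι] [MeasurableSpace E] (P : Measure E)
    (C M : ℝ≥0) (f : (ι → E) → ℝ) : Prop where
  measurable : Measurable f
  exists_dominating : ∃ g : ι → E → ℝ≥0∞, (∀ l, Measurable (g l)) ∧ (∀ l x, g l x ≤ M) ∧
    (∀ l, ∫⁻ x, g l x ∂P ≤ C) ∧ ∀ w, ‖f w‖ₑ ≤ ∏ l, g l (w l)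

namespace ProductDominated

variable {ι κ E : Type*} [Fintype ι] [Fintype κ] [MeasurableSpace E] {P : Measure E}
  [IsProbabilityMeasure P] {C M : ℝ≥0} {f : (ι → E) → ℝ}

theorem memLp_comp (hf : ProductDominated P C M f) (i : ι → κ) (q : ℝ≥0∞) :
    MemLp (fun v : κ → E => f (v ∘ i)) q (Measure.pi fun _ => P) := by
  obtain ⟨g, -, hgM, -, hfg⟩ := hf.exists_dominating
  refine MemLp.of_bound (hf.measurable.comp (by fun_prop)).aestronglyMeasurable
    ((M ^ Fintype.card ι : ℝ≥0) : ℝ) (.of_forall fun v => ?_)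
  rw [← coe_nnnorm, NNReal.coe_le_coe, ← ENNReal.coe_le_coe]
  calc ‖f (v ∘ i)‖ₑ ≤ ∏ l, g l (v (i l)) := hfg _
    _ ≤ ∏ _l : ι, (M : ℝ≥0∞) := by gcongr with l; exact hgM l _
    _ = ((M ^ Fintype.card ι : ℝ≥0) : ℝ≥0∞) := by simp [Finset.card_univ]

theorem integral_comp_injective (hf : ProductDominated P C M f) {i : ι → κ}
    (hi : Function.Injective i) :
    ∫ v, f (v ∘ i) ∂Measure.pi (fun _ : κ => P) = ∫ w, f w ∂Measure.pi fun _ => P := by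
  have mp := measurePreserving_comp_injective (fun _ : κ => P) hi
  rw [← integral_map mp.aemeasurable hf.measurable.aestronglyMeasurable, mp.map_eq]
  rfl

theorem nnnorm_integral_comp_le (hf : ProductDominated P C M f) {i : ι → κ}
    (hi : Function.Injective i) :
    ‖∫ v, f (v ∘ i) ∂Measure.pi (fun _ : κ => P)‖₊ ≤ C ^ Fintype.card ι := by
  obtain ⟨g, hg, -, hgC, hfg⟩ := hf.exists_dominating
  rw [← ENNReal.coe_le_coe, ENNReal.coe_pow]
  calc ‖∫ v, f (v ∘ i) ∂Measure.pi (fun _ : κ => P)‖ₑ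
      ≤ ∫⁻ v, ∏ l, g l (v (i l)) ∂Measure.pi (fun _ : κ => P) :=
        (enorm_integral_le_lintegral_enorm _).trans (lintegral_mono fun v => hfg _)
    _ = ∏ l, ∫⁻ x, g l x ∂P := lintegral_prod_comp_injective P hg hi
    _ ≤ ∏ _l : ι, (C : ℝ≥0∞) := by gcongr with l; exact hgC l
    _ = (C : ℝ≥0∞) ^ Fintype.card ι := by rw [Finset.prod_const, Finset.card_univ]

theorem covariance_eq_zero (hf : ProductDominated P C M f) {i j : ι → κ}
    (hij : Disjoint (Set.range i) (Set.range j)) :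
    cov[fun v => f (v ∘ i), fun v => f (v ∘ j); Measure.pi fun _ : κ => P] = 0 := by
  classical
  have indep := (iIndepFun_pi (μ := fun _ : κ => P) (X := fun _ (x : E) => x)
    fun _ => aemeasurable_id).indepFun_finset (Finset.univ.image i) (Finset.univ.image j)
      (by simpa [← Finset.disjoint_coe] using hij) fun k => measurable_pi_apply k
  have select (i : ι → κ) : Measurable fun (x : Finset.univ.image i → E) =>
      f fun l => x ⟨i l, Finset.mem_image_of_mem i (Finset.mem_univ l)⟩ :=
    hf.measurable.comp (by fun_prop)
  exact (indep.comp (select i) (select j)).covariance_eq_zero (hf.memLp_comp i 2)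
    (hf.memLp_comp j 2)

open scoped Classical in
theorem nnnorm_covariance_le (hf : ProductDominated P C M f) (hCM : C ≤ M) {i j : ι → κ}
    (hi : Function.Injective i) (hj : Function.Injective j) :
    ‖cov[fun v => f (v ∘ i), fun v => f (v ∘ j); Measure.pi fun _ : κ => P]‖₊
      ≤ 2 * C ^ Fintype.card ι * ∏ l, if j l ∈ Set.range i then M else C := by
  obtain ⟨g, hg, hgM, hgC, hfg⟩ := hf.exists_dominating
  have mixed : ‖∫ v, f (v ∘ i) * f (v ∘ j) ∂Measure.pi (fun _ : κ => P)‖₊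
      ≤ C ^ Fintype.card ι * ∏ l, if j l ∈ Set.range i then M else C := by
    rw [← ENNReal.coe_le_coe]
    refine (enorm_integral_le_lintegral_enorm _).trans ((lintegral_mono fun v => ?_).trans
      ((lintegral_prod_mul_prod_le hg hgM hgC hi hj).trans_eq ?_))
    · rw [enorm_mul]
      exact mul_le_mul' (hfg _) (hfg _)
    · push_cast [ENNReal.coe_mul, ENNReal.ofNNReal_finsetProd]
      congr! with l
      split_ifs <;> rfl
  have means : ‖(∫ v, f (v ∘ i) ∂Measure.pi fun _ : κ => P)
      * ∫ v, f (v ∘ j) ∂Measure.pi fun _ : κ => P‖₊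
      ≤ C ^ Fintype.card ι * ∏ l, if j l ∈ Set.range i then M else C := by
    rw [nnnorm_mul]
    refine mul_le_mul' (hf.nnnorm_integral_comp_le hi) ((hf.nnnorm_integral_comp_le hj).trans ?_)
    rw [← Finset.card_univ, ← Finset.prod_const]
    gcongr with l
    split_ifs
    exacts [hCM, le_rfl]
  rw [covariance_eq_sub (hf.memLp_comp i 2) (hf.memLp_comp j 2), mul_assoc, two_mul]
  exact (nnnorm_sub_le _ _).trans (add_le_add mixed means)

variable [DecidableEq ι] [DecidableEq κ]

theorem memLp_uStatistic (hf : ProductDominated P C M f) (q : ℝ≥0∞) :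
    MemLp (uStatistic (κ := κ) f) q (Measure.pi fun _ => P) := by
  rw [show uStatistic (κ := κ) f = fun v => _ from funext (uStatistic_eq f)]
  have term_memLp (i : ι ↪ κ) := hf.memLp_comp (⇑i) q
  exact (memLp_finsetSum _ fun i _ => term_memLp i).const_mul _

theorem integral_uStatistic (hf : ProductDominated P C M f)
    (h : Fintype.card ι ≤ Fintype.card κ) :
    ∫ v, uStatistic f v ∂Measure.pi (fun _ : κ => P) = ∫ w, f w ∂Measure.pi fun _ => P := by
  have : Nonempty (ι ↪ κ) := Function.Embedding.nonempty_of_card_le h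
  simp only [uStatistic_eq]
  have term_integrable (i : ι ↪ κ) := (hf.memLp_comp (⇑i) 1).integrable le_rfl
  rw [integral_const_mul, integral_finsetSum _ fun i _ => term_integrable i]
  simp only [hf.integral_comp_injective (Function.Embedding.injective _), Finset.sum_const,
    Finset.card_univ, nsmul_eq_mul]
  exact inv_mul_cancel_left₀ (by simp [h]) _

omit [DecidableEq ι] [DecidableEq κ] in
open scoped Classical in
theorem sum_nnnorm_covariance_le (hf : ProductDominated P C M f) (hCM : C ≤ M) (i : ι ↪ κ) :
    ∑ j : ι ↪ κ, ‖cov[fun v => f (v ∘ i), fun v => f (v ∘ j); Measure.pi fun _ : κ => P]‖₊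
      ≤ 2 * C ^ Fintype.card ι * (Fintype.card ι * (Fintype.card ι * M
        * (Fintype.card ι * M + Fintype.card κ * C) ^ (Fintype.card ι - 1))) := by
  have cov_le (j : ι ↪ κ) := hf.nnnorm_covariance_le hCM i.injective j.injective
  calc ∑ j : ι ↪ κ, ‖cov[fun v => f (v ∘ i), fun v => f (v ∘ j); Measure.pi fun _ : κ => P]‖₊
      = ∑ j ∈ Finset.univ.filter fun j : ι ↪ κ => ¬ Disjoint (Set.range i) (Set.range j),
          ‖cov[fun v => f (v ∘ i), fun v => f (v ∘ j); Measure.pi fun _ : κ => P]‖₊ := by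
        refine (Finset.sum_filter_of_ne fun j _ hj => mt (fun hdisj => ?_) hj).symm
        rw [hf.covariance_eq_zero hdisj, nnnorm_zero]
    _ ≤ ∑ j ∈ Finset.univ.filter fun j : ι ↪ κ => ¬ Disjoint (Set.range i) (Set.range j),
          2 * C ^ Fintype.card ι * ∏ l, (if j l ∈ Set.range i then M else C) :=
        Finset.sum_le_sum fun j _ => cov_le j
    _ ≤ _ := by
        rw [← Finset.mul_sum]
        refine mul_le_mul_right ?_ _
        exact sum_prod_ite_mem_range_le i C M

theorem variance_uStatistic_le (hf : ProductDominated P C M f) (hCM : C ≤ M)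
    (h : Fintype.card ι ≤ Fintype.card κ) :
    Var[uStatistic f; Measure.pi fun _ : κ => P]
      ≤ 2 * C ^ Fintype.card ι * (Fintype.card ι ^ (Fintype.card ι + 2)
        * (C + Fintype.card ι * (M / Fintype.card κ)) ^ (Fintype.card ι - 1)
          * (M / Fintype.card κ)) := by
  set r := Fintype.card ι
  set n := Fintype.card κ
  let R : ℝ≥0 := 2 * C ^ r * (r * (r * M * (r * M + n * C) ^ (r - 1)))
  have hD : (n.descFactorial r : ℝ) ≠ 0 := by exact_mod_cast (Nat.descFactorial_pos.2 h).ne'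
  have term_memLp (i : ι ↪ κ) := hf.memLp_comp (⇑i) 2
  have rows : ∑ i : ι ↪ κ, ∑ j : ι ↪ κ,
      cov[fun v => f (v ∘ i), fun v => f (v ∘ j); Measure.pi fun _ : κ => P]
      ≤ n.descFactorial r * R := by
    calc _ ≤ ∑ i : ι ↪ κ, ((∑ j : ι ↪ κ, ‖cov[fun v => f (v ∘ i), fun v => f (v ∘ j);
          Measure.pi fun _ : κ => P]‖₊ : ℝ≥0) : ℝ) := by
          push_cast
          gcongr with i _ j _
          exact Real.le_norm_self _
      _ ≤ ∑ _i : ι ↪ κ, (R : ℝ) := by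
          gcongr with i
          exact hf.sum_nnnorm_covariance_le hCM i
      _ = n.descFactorial r * R := by
          rw [Finset.sum_const, nsmul_eq_mul, Finset.card_univ, Fintype.card_embedding_eq]
  calc Var[uStatistic f; Measure.pi fun _ : κ => P]
      = (n.descFactorial r : ℝ)⁻¹ ^ 2 * ∑ i : ι ↪ κ, ∑ j : ι ↪ κ,
          cov[fun v => f (v ∘ i), fun v => f (v ∘ j); Measure.pi fun _ : κ => P] := by
        rw [show uStatistic (κ := κ) f = fun v => _ from funext (uStatistic_eq f),
          variance_const_mul, variance_fun_sum term_memLp, Fintype.card_embedding_eq]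
    _ ≤ (n.descFactorial r : ℝ)⁻¹ ^ 2 * (n.descFactorial r * R) := by gcongr
    _ = 2 * C ^ r * (r * (r * M * (r * M + n * C) ^ (r - 1)) / n.descFactorial r) := by
        simp only [R]
        push_cast
        field_simp
    _ ≤ _ := by
        gcongr
        exact mul_pow_div_descFactorial_le h C M

end ProductDominated

section FirstCoordinate

variable {r N : ℕ}

/-- The injective tuple with first entry `k` and remaining entries `i`, relabelled by
`k.succAbove` so as to avoid `k`. -/
def consAvoiding (k : Fin (N + 1)) (i : Fin r ↪ Fin N) : Fin (r + 1) ↪ Fin (N + 1) :=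
  ⟨Fin.cons k (k.succAbove ∘ i), Fin.cons_injective_iff.2
    ⟨fun ⟨l, hl⟩ => k.succAbove_ne (i l) hl, Fin.succAbove_right_injective.comp i.injective⟩⟩

theorem bijective_consAvoiding :
    Function.Bijective fun a : Fin (N + 1) × (Fin r ↪ Fin N) => consAvoiding a.1 a.2 := by
  refine (Fintype.bijective_iff_injective_and_card _).2 ⟨?_, ?_⟩
  · rintro ⟨k, i⟩ ⟨k', i'⟩ h
    have h : (Fin.cons k (k.succAbove ∘ i) : Fin (r + 1) → Fin (N + 1))
        = Fin.cons k' (k'.succAbove ∘ i') := congrArg DFunLike.coe h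
    obtain ⟨rfl, hi⟩ := Fin.cons_injective2 h
    exact Prod.ext rfl (DFunLike.coe_injective (Fin.succAbove_right_injective.comp_left hi))
  · simp only [Fintype.card_prod, Fintype.card_embedding_eq, Fintype.card_fin,
      Nat.succ_descFactorial_succ]

theorem uStatistic_fin_succ {E : Type*} (F : E → (Fin r → E) → ℝ) (v : Fin (N + 1) → E) :
    uStatistic (fun w : Fin (r + 1) → E => F (w 0) (Fin.tail w)) v
      = 𝔼 k, uStatistic (F (v k)) (k.removeNth v) := by
  calc uStatistic (fun w : Fin (r + 1) → E => F (w 0) (Fin.tail w)) v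
      = 𝔼 a : Fin (N + 1) × (Fin r ↪ Fin N), F (v a.1) (a.1.removeNth v ∘ a.2) :=
        (Fintype.expect_bijective _ bijective_consAvoiding _ _ fun _ => rfl).symm
    _ = 𝔼 k, uStatistic (F (v k)) (k.removeNth v) := Finset.expect_product _ _ _

end FirstCoordinate

theorem measurable_uStatistic {ι κ E α : Type*} [Fintype ι] [Fintype κ] [DecidableEq ι]
    [DecidableEq κ] [MeasurableSpace E] [MeasurableSpace α] {F : α → (ι → E) → ℝ}
    (hF : Measurable (Function.uncurry F)) {v : α → κ → E} (hv : Measurable v) :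
    Measurable fun a => uStatistic (F a) (v a) := by
  simp only [uStatistic_eq]
  refine (Finset.measurable_fun_sum _ fun i _ => ?_).const_mul _
  exact hF.comp (f := fun a => (a, v a ∘ i)) (by fun_prop)

theorem lintegral_enorm_expect_le {ι α : Type*} [Fintype ι] [Nonempty ι] [MeasurableSpace α]
    {μ : Measure α} {F : ι → α → ℝ} (hF : ∀ k, Measurable (F k)) {B : ℝ≥0∞}
    (hB : ∀ k, ∫⁻ x, ‖F k x‖ₑ ∂μ ≤ B) : ∫⁻ x, ‖𝔼 k, F k x‖ₑ ∂μ ≤ B := by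
  have pointwise (x : α) : ‖𝔼 k, F k x‖ₑ ≤ (Fintype.card ι : ℝ≥0∞)⁻¹ * ∑ k, ‖F k x‖ₑ := by
    rw [Fintype.expect_eq_sum_div_card, div_eq_inv_mul, enorm_mul, enorm_inv (by simp)]
    gcongr
    · simp
    · exact enorm_sum_le _ _
  calc ∫⁻ x, ‖𝔼 k, F k x‖ₑ ∂μ
      ≤ ∫⁻ x, (Fintype.card ι : ℝ≥0∞)⁻¹ * ∑ k, ‖F k x‖ₑ ∂μ := lintegral_mono pointwise
    _ = (Fintype.card ι : ℝ≥0∞)⁻¹ * ∑ k, ∫⁻ x, ‖F k x‖ₑ ∂μ := by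
        rw [lintegral_const_mul _ (by fun_prop), lintegral_finsetSum _ fun k _ => (hF k).enorm]
    _ ≤ (Fintype.card ι : ℝ≥0∞)⁻¹ * ∑ _k : ι, B := by gcongr with k; exact hB k
    _ = B := by
        rw [Finset.sum_const, nsmul_eq_mul, Finset.card_univ, ← mul_assoc,
          ENNReal.inv_mul_cancel (by simp) (by simp), one_mul]

theorem lintegral_enorm_sub_integral_le_sqrt_variance {α : Type*} [MeasurableSpace α]
    {μ : Measure α} [IsProbabilityMeasure μ] {X : α → ℝ} (hX : MemLp X 2 μ) :
    ∫⁻ x, ‖X x - ∫ y, X y ∂μ‖ₑ ∂μ ≤ ENNReal.ofReal (√Var[X; μ]) := by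
  have centred : AEStronglyMeasurable (fun x => X x - ∫ y, X y ∂μ) μ :=
    hX.aestronglyMeasurable.sub aestronglyMeasurable_const
  calc ∫⁻ x, ‖X x - ∫ y, X y ∂μ‖ₑ ∂μ
      = eLpNorm (fun x => X x - ∫ y, X y ∂μ) 1 μ := eLpNorm_one_eq_lintegral_enorm.symm
    _ ≤ eLpNorm (fun x => X x - ∫ y, X y ∂μ) 2 μ :=
        eLpNorm_le_eLpNorm_of_exponent_le (by norm_num) centred
    _ = eVar[X; μ] ^ (1 / 2 : ℝ) := by
        rw [eLpNorm_eq_lintegral_rpow_enorm_toReal (by simp) (by simp)]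
        simp [evariance]
    _ = ENNReal.ofReal (√Var[X; μ]) := by
        rw [← hX.ofReal_variance_eq, Real.sqrt_eq_rpow,
          ENNReal.ofReal_rpow_of_nonneg (variance_nonneg _ _) (by norm_num)]

section LocalizedConsistency

variable {E : Type*} [MeasurableSpace E] {P : Measure E} [IsProbabilityMeasure P] {r : ℕ}
  {C M : ℝ≥0}

/-- Upper bound for the mean absolute deviation of a U-statistic of degree `r` and sample size `N`
whose kernel is product dominated with constants `C ≤ M`. -/
def uStatisticErrorBound (r : ℕ) (C M : ℝ≥0) (N : ℕ) : ℝ≥0∞ :=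
  ENNReal.ofReal √(2 * C ^ r * (r ^ (r + 2) * (C + r * (M / N)) ^ (r - 1) * (M / N)))

theorem lintegral_enorm_uStatistic_sub_integral_le {f : (Fin r → E) → ℝ}
    (hf : ProductDominated P C M f) (hCM : C ≤ M) {N : ℕ} (h : r ≤ N) :
    ∫⁻ v, ‖uStatistic f v - ∫ w, f w ∂Measure.pi fun _ => P‖ₑ ∂Measure.pi (fun _ : Fin N => P)
      ≤ uStatisticErrorBound r C M N := by
  have card_le : Fintype.card (Fin r) ≤ Fintype.card (Fin N) := by simpa using h
  have mean := hf.integral_uStatistic (κ := Fin N) card_le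
  have var_le := hf.variance_uStatistic_le (κ := Fin N) hCM card_le
  have memLp := hf.memLp_uStatistic (κ := Fin N) 2
  rw [Fintype.card_fin, Fintype.card_fin] at var_le
  calc ∫⁻ v, ‖uStatistic f v - ∫ w, f w ∂Measure.pi fun _ => P‖ₑ ∂Measure.pi (fun _ : Fin N => P)
      ≤ ENNReal.ofReal √Var[uStatistic f; Measure.pi fun _ : Fin N => P] := by
        rw [← mean]
        exact lintegral_enorm_sub_integral_le_sqrt_variance memLp
    _ ≤ uStatisticErrorBound r C M N := ENNReal.ofReal_le_ofReal (Real.sqrt_le_sqrt var_le)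

theorem lintegral_enorm_uStatistic_sub_le {f : (Fin r → E) → ℝ}
    (hf : ProductDominated P C M f) (hCM : C ≤ M) {N : ℕ} (h : r ≤ N) (c : ℝ) :
    ∫⁻ v, ‖uStatistic f v - c‖ₑ ∂Measure.pi (fun _ : Fin N => P)
      ≤ uStatisticErrorBound r C M N + ‖(∫ w, f w ∂Measure.pi fun _ => P) - c‖ₑ := by
  set m := ∫ w, f w ∂Measure.pi fun _ => P
  calc ∫⁻ v, ‖uStatistic f v - c‖ₑ ∂Measure.pi (fun _ : Fin N => P)
      ≤ ∫⁻ v, (‖uStatistic f v - m‖ₑ + ‖m - c‖ₑ) ∂Measure.pi (fun _ : Fin N => P) :=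
        lintegral_mono fun v => by simpa using enorm_add_le (uStatistic f v - m) (m - c)
    _ ≤ uStatisticErrorBound r C M N + ‖m - c‖ₑ := by
        rw [lintegral_add_right _ measurable_const, lintegral_const, measure_univ, mul_one]
        gcongr
        exact lintegral_enorm_uStatistic_sub_integral_le hf hCM h

theorem lintegral_enorm_uStatistic_sub_expect_le {F : E → (Fin r → E) → ℝ} {θ : E → ℝ}
    (hFm : Measurable (Function.uncurry F)) (hθ : Measurable θ)
    (hF : ∀ x, ProductDominated P C M (F x)) (hCM : C ≤ M) {N : ℕ} (h : r ≤ N) :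
    ∫⁻ v, ‖uStatistic (fun w : Fin (r + 1) → E => F (w 0) (Fin.tail w)) v - 𝔼 k, θ (v k)‖ₑ
        ∂Measure.pi (fun _ : Fin (N + 1) => P)
      ≤ uStatisticErrorBound r C M N
        + ∫⁻ x, ‖(∫ w, F x w ∂Measure.pi fun _ => P) - θ x‖ₑ ∂P := by
  have hG : Measurable fun a : E × (Fin N → E) => uStatistic (F a.1) a.2 - θ a.1 :=
    have hF : Measurable fun a : (E × (Fin N → E)) × (Fin r → E) => F a.1.1 a.2 :=
      hFm.comp (f := fun a : (E × (Fin N → E)) × (Fin r → E) => (a.1.1, a.2)) (by fun_prop)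
    (measurable_uStatistic hF measurable_snd).sub (hθ.comp measurable_fst)
  have mp (k : Fin (N + 1)) : MeasurePreserving (fun v : Fin (N + 1) → E => (v k, k.removeNth v))
      (Measure.pi fun _ => P) (P.prod (Measure.pi fun _ => P)) :=
    measurePreserving_piFinSuccAbove (fun _ => P) k
  have hD (k : Fin (N + 1)) : Measurable fun v : Fin (N + 1) → E =>
      uStatistic (F (v k)) (k.removeNth v) - θ (v k) :=
    (hG.comp (mp k).measurable :)
  simp only [uStatistic_fin_succ, ← Finset.expect_sub_distrib]
  refine lintegral_enorm_expect_le hD fun k => ?_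
  calc ∫⁻ v, ‖uStatistic (F (v k)) (k.removeNth v) - θ (v k)‖ₑ ∂Measure.pi (fun _ => P)
      = ∫⁻ x, ∫⁻ w, ‖uStatistic (F x) w - θ x‖ₑ ∂Measure.pi (fun _ => P) ∂P := by
        rw [← lintegral_prod _ hG.enorm.aemeasurable]
        exact (mp k).lintegral_comp hG.enorm
    _ ≤ ∫⁻ x, (uStatisticErrorBound r C M N
          + ‖(∫ w, F x w ∂Measure.pi fun _ => P) - θ x‖ₑ) ∂P :=
        lintegral_mono fun x => lintegral_enorm_uStatistic_sub_le (hF x) hCM h (θ x)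
    _ = _ := by rw [lintegral_add_left measurable_const, lintegral_const, measure_univ, mul_one]

end LocalizedConsistency

theorem ProductDominated.mono {ι E : Type*} [Fintype ι] [MeasurableSpace E] {P : Measure E}
    {C M M' : ℝ≥0} {f : (ι → E) → ℝ} (hf : ProductDominated P C M f) (hM : M ≤ M') :
    ProductDominated P C M' f := by
  obtain ⟨g, hg, hgM, hgC, hfg⟩ := hf.exists_dominating
  exact ⟨hf.measurable, g, hg, fun l x => (hgM l x).trans (by exact_mod_cast hM), hgC, hfg⟩

theorem tendsto_uStatisticErrorBound (r : ℕ) (C : ℝ≥0) {M : ℕ → ℝ≥0}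
    (hM : Tendsto (fun n => M n / n) atTop (𝓝 0)) :
    Tendsto (fun n => uStatisticErrorBound r C (M n) n) atTop (𝓝 0) := by
  have cont : Continuous fun t : ℝ≥0 => ENNReal.ofReal
      √(2 * C ^ r * (r ^ (r + 2) * (C + r * t) ^ (r - 1) * t) : ℝ≥0) :=
    ENNReal.continuous_ofReal.comp (by fun_prop)
  have lim := (cont.tendsto 0).comp hM
  simp only [mul_zero, NNReal.coe_zero, Real.sqrt_zero, ENNReal.ofReal_zero] at lim
  exact lim.congr fun n => by simp only [uStatisticErrorBound, Function.comp_apply]; push_cast; rfl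

/-! ### U-statistics of an i.i.d. sample -/

section Sampling

variable {Ω E : Type*} [MeasurableSpace Ω] [MeasurableSpace E] {μ : Measure Ω}
  [IsProbabilityMeasure μ] {P : Measure E} {V : ℕ → Ω → E}

theorem measurePreserving_sample (hVm : ∀ i, Measurable (V i)) (hV : iIndepFun V μ)
    (hlaw : ∀ i, μ.map (V i) = P) (n : ℕ) :
    MeasurePreserving (fun ω (i : Fin n) => V i ω) μ (Measure.pi fun _ => P) := by
  refine ⟨by fun_prop, ?_⟩
  rw [(iIndepFun_iff_map_fun_eq_pi_map fun i => (hVm _).aemeasurable).1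
    (hV.precomp Fin.val_injective)]
  simp only [hlaw]

omit [IsProbabilityMeasure μ] in
theorem tendsto_lintegral_enorm_expect_sub_integral (hVm : ∀ i, Measurable (V i))
    (hV : iIndepFun V μ) (hlaw : ∀ i, μ.map (V i) = P) {θ : E → ℝ} (hθm : Measurable θ)
    (hθ : Integrable θ P) :
    Tendsto (fun n => ∫⁻ ω, ‖(𝔼 k : Fin n, θ (V k ω)) - ∫ x, θ x ∂P‖ₑ ∂μ) atTop (𝓝 0) := by
  have mp (i : ℕ) : MeasurePreserving (V i) μ P := ⟨hVm i, hlaw i⟩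
  have mean : ∫ ω, θ (V 0 ω) ∂μ = ∫ x, θ x ∂P := by
    rw [← hlaw 0, integral_map (hVm 0).aemeasurable hθm.aestronglyMeasurable]
  have ident (i : ℕ) : IdentDistrib (V i) (V 0) μ μ :=
    ⟨(hVm i).aemeasurable, (hVm 0).aemeasurable, by rw [hlaw, hlaw]⟩
  have lln := strong_law_Lp le_rfl ENNReal.one_ne_top (fun i ω => θ (V i ω))
    (memLp_one_iff_integrable.2 ((mp 0).integrable_comp_of_integrable hθ))
    (fun i j hij => (hV.indepFun hij).comp hθm hθm) fun i => (ident i).comp hθm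
  refine lln.congr fun n => ?_
  rw [eLpNorm_one_eq_lintegral_enorm, mean]
  simp only [Fintype.expect_eq_sum_div_card, Fintype.card_fin, div_eq_inv_mul, smul_eq_mul]
  congr! with ω
  exact (Fin.sum_univ_eq_sum_range (fun i => θ (V i ω)) n).symm

theorem lintegral_enorm_uStatistic_sub_integral_sample_le (hVm : ∀ i, Measurable (V i))
    (hV : iIndepFun V μ) (hlaw : ∀ i, μ.map (V i) = P) {r : ℕ} {C M : ℝ≥0}
    {F : E → (Fin r → E) → ℝ} {θ : E → ℝ} (hFm : Measurable (Function.uncurry F))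
    (hF : ∀ x, ProductDominated P C M (F x)) (hCM : C ≤ M) (hθ : Measurable θ) {N : ℕ}
    (h : r ≤ N) (c : ℝ) :
    ∫⁻ ω, ‖uStatistic (fun w : Fin (r + 1) → E => F (w 0) (Fin.tail w))
        (fun i : Fin (N + 1) => V i ω) - c‖ₑ ∂μ
      ≤ uStatisticErrorBound r C M N + ∫⁻ x, ‖(∫ w, F x w ∂Measure.pi fun _ => P) - θ x‖ₑ ∂P
        + ∫⁻ ω, ‖(𝔼 k : Fin (N + 1), θ (V k ω)) - c‖ₑ ∂μ := by
  have : IsProbabilityMeasure P := hlaw 0 ▸ Measure.isProbabilityMeasure_map (hVm 0).aemeasurable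
  let U (v : Fin (N + 1) → E) : ℝ := uStatistic (fun w : Fin (r + 1) → E => F (w 0) (Fin.tail w)) v
  let A (v : Fin (N + 1) → E) : ℝ := 𝔼 k, θ (v k)
  have hF0 : Measurable fun w : Fin (r + 1) → E => F (w 0) (Fin.tail w) :=
    hFm.comp (f := fun w : Fin (r + 1) → E => (w 0, Fin.tail w)) (by unfold Fin.tail; fun_prop)
  have hU : Measurable U := measurable_uStatistic (F := fun _ w => F (w 0) (Fin.tail w))
    (hF0.comp measurable_snd) measurable_id
  have hA : Measurable A := by
    simp only [A, Fintype.expect_eq_sum_div_card]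
    fun_prop
  let S (ω : Ω) (i : Fin (N + 1)) : E := V i ω
  have mp : MeasurePreserving S μ (Measure.pi fun _ => P) :=
    measurePreserving_sample hVm hV hlaw (N + 1)
  calc ∫⁻ ω, ‖U (S ω) - c‖ₑ ∂μ
      ≤ ∫⁻ ω, (‖U (S ω) - A (S ω)‖ₑ + ‖A (S ω) - c‖ₑ) ∂μ :=
        lintegral_mono fun ω => by
          simpa using enorm_add_le (U (S ω) - A (S ω)) (A (S ω) - c)
    _ = ∫⁻ v, ‖U v - A v‖ₑ ∂Measure.pi (fun _ => P) + ∫⁻ ω, ‖A (S ω) - c‖ₑ ∂μ := by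
        have hUA : Measurable fun v => ‖U v - A v‖ₑ := (hU.sub hA).enorm
        have hUAS : Measurable fun ω => ‖U (S ω) - A (S ω)‖ₑ := hUA.comp mp.measurable
        rw [lintegral_add_left hUAS, mp.lintegral_comp hUA]
    _ ≤ _ := by
        gcongr
        exact lintegral_enorm_uStatistic_sub_expect_le hFm hθ hF hCM h

theorem tendsto_lintegral_enorm_uStatistic_sub_integral (hVm : ∀ i, Measurable (V i))
    (hV : iIndepFun V μ) (hlaw : ∀ i, μ.map (V i) = P) {r : ℕ} {C : ℝ≥0} {M : ℕ → ℝ≥0}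
    {F : ℕ → E → (Fin r → E) → ℝ} {θ : E → ℝ} (hFm : ∀ n, Measurable (Function.uncurry (F n)))
    (hF : ∀ n x, ProductDominated P C (M n) (F n x)) (hM : Tendsto (fun n => M n / n) atTop (𝓝 0))
    (hθm : Measurable θ) (hθ : Integrable θ P)
    (hlim : Tendsto (fun n => ∫⁻ x, ‖(∫ w, F n x w ∂Measure.pi fun _ => P) - θ x‖ₑ ∂P)
      atTop (𝓝 0)) :
    Tendsto (fun n => ∫⁻ ω, ‖uStatistic (fun w : Fin (r + 1) → E => F n (w 0) (Fin.tail w))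
      (fun i : Fin n => V i ω) - ∫ x, θ x ∂P‖ₑ ∂μ) atTop (𝓝 0) := by
  have ratio : Tendsto (fun N : ℕ => (M (N + 1) + C) / N) atTop (𝓝 0) := by
    have shifted := ((hM.comp (tendsto_add_atTop_nat 1)).const_mul 2).add
      ((tendsto_const_div_atTop_nhds_zero_nat C))
    rw [mul_zero, add_zero] at shifted
    refine tendsto_of_tendsto_of_tendsto_of_le_of_le' tendsto_const_nhds shifted
      (.of_forall fun _ => zero_le) ?_
    filter_upwards [eventually_ge_atTop 1] with N hN
    have two_mul_ge : ((N + 1 : ℕ) : ℝ≥0) ≤ 2 * N := by norm_cast; lia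
    have : (N : ℝ≥0) ≠ 0 := by positivity
    rw [add_div, Function.comp_apply]
    gcongr
    calc M (N + 1) / N = 2 * (M (N + 1) / (2 * N)) := by field_simp
      _ ≤ 2 * (M (N + 1) / (N + 1 : ℕ)) := by gcongr
  have bound := ((tendsto_uStatisticErrorBound r C ratio).add
    (hlim.comp (tendsto_add_atTop_nat 1))).add
      ((tendsto_lintegral_enorm_expect_sub_integral hVm hV hlaw hθm hθ).comp
        (tendsto_add_atTop_nat 1))
  rw [add_zero, add_zero] at bound
  rw [← tendsto_add_atTop_iff_nat 1]
  refine tendsto_of_tendsto_of_tendsto_of_le_of_le' tendsto_const_nhds bound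
    (.of_forall fun _ => zero_le) ?_
  filter_upwards [eventually_ge_atTop r] with N hN
  exact lintegral_enorm_uStatistic_sub_integral_sample_le hVm hV hlaw (hFm (N + 1))
    (fun x => (hF (N + 1) x).mono le_self_add) le_add_self hθm hN _

end Sampling

section ProductDensities

variable {ι : Type*} [Fintype ι]

theorem pi_withDensity {E : ι → Type*} [∀ i, MeasurableSpace (E i)] (ν : ∀ i, Measure (E i))
    [∀ i, SigmaFinite (ν i)] {f : ∀ i, E i → ℝ≥0∞} (hf : ∀ i, Measurable (f i))
    [∀ i, SigmaFinite ((ν i).withDensity (f i))] :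
    Measure.pi (fun i => (ν i).withDensity (f i))
      = (Measure.pi ν).withDensity fun x => ∏ i, f i (x i) := by
  classical
  refine Measure.pi_eq fun s hs => ?_
  have indicator_pi (x : ∀ i, E i) : (Set.univ.pi s).indicator (fun x => ∏ i, f i (x i)) x
      = ∏ i, (s i).indicator (f i) (x i) := by
    by_cases hx : x ∈ Set.univ.pi s
    · rw [Set.indicator_of_mem hx]
      exact Finset.prod_congr rfl fun i _ => (Set.indicator_of_mem (hx i trivial) _).symm
    · obtain ⟨i, hi⟩ : ∃ i, x i ∉ s i := by simpa using hx
      rw [Set.indicator_of_notMem hx,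
        Finset.prod_eq_zero (Finset.mem_univ i) (Set.indicator_of_notMem hi _)]
  rw [withDensity_apply _ (.univ_pi hs), ← lintegral_indicator (.univ_pi hs)]
  simp only [indicator_pi]
  rw [lintegral_pi_prod ν fun i => (hf i).indicator (hs i)]
  exact Finset.prod_congr rfl fun i _ => by
    rw [lintegral_indicator (hs i), withDensity_apply _ (hs i)]

theorem integral_pi_withDensity_ofReal {E : ι → Type*} [∀ i, MeasurableSpace (E i)]
    (ν : ∀ i, Measure (E i)) [∀ i, SigmaFinite (ν i)] {a : ∀ i, E i → ℝ}
    (ha : ∀ i, Measurable (a i)) (ha0 : ∀ i x, 0 ≤ a i x) (ψ : (∀ i, E i) → ℝ) :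
    ∫ x, ψ x ∂Measure.pi (fun i => (ν i).withDensity fun y => .ofReal (a i y))
      = ∫ x, (∏ i, a i (x i)) * ψ x ∂Measure.pi ν := by
  rw [pi_withDensity ν fun i => (ha i).ennreal_ofReal,
    integral_withDensity_eq_integral_toReal_smul (by fun_prop)
      (.of_forall fun x => ENNReal.prod_lt_top fun i _ => ENNReal.ofReal_lt_top)]
  refine integral_congr_ae (.of_forall fun x => ?_)
  simp [ENNReal.toReal_prod, ha0]

theorem integral_prod_mul_comp {E X : Type*} [MeasurableSpace E] [MeasurableSpace X]
    (P : Measure E) [SigmaFinite P] {k : ι → E → ℝ} (hk : ∀ i, Measurable (k i))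
    (hk0 : ∀ i v, 0 ≤ k i v) {T : E → X} (hT : Measurable T) {ν : ι → Measure X}
    [∀ i, SigmaFinite (ν i)]
    (hν : ∀ i, (P.withDensity fun v => .ofReal (k i v)).map T = ν i)
    {ψ : (ι → X) → ℝ} (hψ : Measurable ψ) :
    ∫ w, (∏ i, k i (w i)) * ψ (T ∘ w) ∂Measure.pi (fun _ => P) = ∫ x, ψ x ∂Measure.pi ν := by
  obtain rfl : (fun i => (P.withDensity fun v => .ofReal (k i v)).map T) = ν := funext hν
  rw [← Measure.pi_map_pi fun i => hT.aemeasurable,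
    integral_map (by fun_prop : Measurable _).aemeasurable hψ.aestronglyMeasurable,
    ← integral_pi_withDensity_ofReal (fun _ => P) hk hk0]
  rfl

theorem enorm_prod_sub_prod_le [DecidableEq ι] (a b : ι → ℝ) :
    ‖∏ i, a i - ∏ i, b i‖ₑ ≤ ∑ i, ∏ j, if j = i then ‖a j - b j‖ₑ else ‖a j‖ₑ + ‖b j‖ₑ := by
  have telescope := (ContinuousMultilinearMap.mkPiAlgebra ℝ ι ℝ).norm_image_sub_le' a b
  simp only [ContinuousMultilinearMap.mkPiAlgebra_apply, ContinuousMultilinearMap.norm_mkPiAlgebra,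
    one_mul] at telescope
  rw [← ofReal_norm]
  refine (ENNReal.ofReal_le_ofReal telescope).trans ?_
  rw [ENNReal.ofReal_sum_of_nonneg fun i _ => by positivity]
  gcongr with i
  rw [ENNReal.ofReal_prod_of_nonneg fun j _ => by positivity]
  gcongr with j
  split_ifs with hj
  · rw [hj, ofReal_norm]
  · simp only [← ofReal_norm]
    rw [← ENNReal.ofReal_add (norm_nonneg _) (norm_nonneg _)]
    exact ENNReal.ofReal_le_ofReal (max_le_add_of_nonneg (norm_nonneg _) (norm_nonneg _))

variable {X : Type*} [MeasurableSpace X] {ν : Measure X} [SigmaFinite ν] {a b : ι → X → ℝ}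
  {C : ℝ≥0}

theorem lintegral_enorm_prod_sub_prod_le (ha : ∀ i, Measurable (a i)) (hb : ∀ i, Measurable (b i))
    (haC : ∀ i, ∫⁻ x, ‖a i x‖ₑ ∂ν ≤ C) (hbC : ∀ i, ∫⁻ x, ‖b i x‖ₑ ∂ν ≤ C) :
    ∫⁻ x, ‖∏ i, a i (x i) - ∏ i, b i (x i)‖ₑ ∂Measure.pi (fun _ => ν)
      ≤ (C + C) ^ (Fintype.card ι - 1) * ∑ i, ∫⁻ x, ‖a i x - b i x‖ₑ ∂ν := by
  classical
  let c (i j : ι) (x : X) : ℝ≥0∞ := if j = i then ‖a j x - b j x‖ₑ else ‖a j x‖ₑ + ‖b j x‖ₑ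
  have hc (i j) : Measurable (c i j) := by
    have := ha j
    have := hb j
    unfold c
    split_ifs <;> fun_prop
  calc ∫⁻ x, ‖∏ i, a i (x i) - ∏ i, b i (x i)‖ₑ ∂Measure.pi (fun _ => ν)
      ≤ ∫⁻ x, ∑ i, ∏ j, c i j (x j) ∂Measure.pi (fun _ => ν) :=
        lintegral_mono fun x => enorm_prod_sub_prod_le _ _
    _ = ∑ i, ∏ j, ∫⁻ x, c i j x ∂ν := by
        rw [lintegral_finsetSum _ fun i _ => by fun_prop]
        exact Finset.sum_congr rfl fun i _ => lintegral_pi_prod _ (hc i)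
    _ ≤ ∑ i, (C + C) ^ (Fintype.card ι - 1) * ∫⁻ x, ‖a i x - b i x‖ₑ ∂ν := by
        gcongr with i
        rw [← Finset.mul_prod_erase _ _ (Finset.mem_univ i), mul_comm, ← Finset.card_univ,
          ← Finset.card_erase_of_mem (Finset.mem_univ i), ← Finset.prod_const]
        gcongr with j hj
        · simp only [c, if_neg (Finset.ne_of_mem_erase hj)]
          rw [lintegral_add_left (ha j).enorm]
          exact add_le_add (haC j) (hbC j)
        · simp [c]
    _ = _ := (Finset.mul_sum ..).symm

theorem enorm_integral_prod_mul_sub_le (ha : ∀ i, Measurable (a i)) (hb : ∀ i, Measurable (b i))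
    (haC : ∀ i, ∫⁻ x, ‖a i x‖ₑ ∂ν ≤ C) (hbC : ∀ i, ∫⁻ x, ‖b i x‖ₑ ∂ν ≤ C) {ψ : (ι → X) → ℝ}
    (hψ : Measurable ψ) {B : ℝ≥0} (hψB : ∀ x, ‖ψ x‖ₑ ≤ B) :
    ‖(∫ x, (∏ i, a i (x i)) * ψ x ∂Measure.pi fun _ => ν)
        - ∫ x, (∏ i, b i (x i)) * ψ x ∂Measure.pi fun _ => ν‖ₑ
      ≤ B * ((C + C) ^ (Fintype.card ι - 1) * ∑ i, ∫⁻ x, ‖a i x - b i x‖ₑ ∂ν) := by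
  have integrable {f : ι → X → ℝ} (hf : ∀ i, Measurable (f i))
      (hfC : ∀ i, ∫⁻ x, ‖f i x‖ₑ ∂ν ≤ C) :
      Integrable (fun x : ι → X => (∏ i, f i (x i)) * ψ x) (Measure.pi fun _ => ν) :=
    (Integrable.fintype_prod fun i => ⟨(hf i).aestronglyMeasurable,
      (hfC i).trans_lt ENNReal.coe_lt_top⟩).mul_bdd hψ.aestronglyMeasurable
        (.of_forall fun x => by exact_mod_cast hψB x)
  rw [← integral_sub (integrable ha haC) (integrable hb hbC)]
  calc ‖∫ x, (∏ i, a i (x i)) * ψ x - (∏ i, b i (x i)) * ψ x ∂Measure.pi fun _ => ν‖ₑ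
      ≤ ∫⁻ x, B * ‖∏ i, a i (x i) - ∏ i, b i (x i)‖ₑ ∂Measure.pi fun _ => ν := by
        refine (enorm_integral_le_lintegral_enorm _).trans (lintegral_mono fun x => ?_)
        rw [← sub_mul, enorm_mul, mul_comm]
        gcongr
        exact hψB x
    _ ≤ _ := by
        rw [lintegral_const_mul _ (by fun_prop)]
        gcongr
        exact lintegral_enorm_prod_sub_prod_le ha hb haC hbC

end ProductDensities

section MarginalDensities

variable {E X Y : Type*} [MeasurableSpace E] [MeasurableSpace X] [MeasurableSpace Y]

theorem map_withDensity_comp (P : Measure E) {T : E → X} (hT : Measurable T) {k : X → ℝ≥0∞}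
    (hk : Measurable k) :
    (P.withDensity fun e => k (T e)).map T = (P.map T).withDensity k := by
  ext s hs
  rw [Measure.map_apply hT hs, withDensity_apply _ (hT hs), withDensity_apply _ hs,
    setLIntegral_map hs hk hT]

variable {μ : Measure X} {ν : Measure Y} [SigmaFinite μ] [SigmaFinite ν]

theorem map_fst_prod_withDensity {F : X × Y → ℝ≥0∞} (hF : Measurable F) :
    ((μ.prod ν).withDensity F).map Prod.fst = μ.withDensity fun x => ∫⁻ y, F (x, y) ∂ν := by
  ext s hs
  rw [Measure.map_apply measurable_fst hs, withDensity_apply _ (measurable_fst hs),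
    withDensity_apply _ hs, ← Set.prod_univ, ← Measure.prod_restrict, Measure.restrict_univ,
    lintegral_prod _ hF.aemeasurable]

theorem map_snd_prod_withDensity {F : X × Y → ℝ≥0∞} (hF : Measurable F) :
    ((μ.prod ν).withDensity F).map Prod.snd = ν.withDensity fun y => ∫⁻ x, F (x, y) ∂μ := by
  ext s hs
  rw [Measure.map_apply measurable_snd hs, withDensity_apply _ (measurable_snd hs),
    withDensity_apply _ hs, ← Set.univ_prod, ← Measure.prod_restrict, Measure.restrict_univ,
    lintegral_prod_symm _ hF.aemeasurable]

theorem map_fst_prod_withDensity_ofReal {f : X × Y → ℝ} (hf : Measurable f) (hf0 : ∀ q, 0 ≤ f q)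
    (hfi : Integrable f (μ.prod ν)) :
    ((μ.prod ν).withDensity fun q => .ofReal (f q)).map Prod.fst
      = μ.withDensity fun x => .ofReal (∫ y, f (x, y) ∂ν) := by
  rw [map_fst_prod_withDensity hf.ennreal_ofReal]
  refine withDensity_congr_ae ?_
  filter_upwards [hfi.prod_right_ae] with x hx
  rw [ofReal_integral_eq_lintegral_ofReal hx (.of_forall fun _ => hf0 _)]

theorem map_snd_prod_withDensity_ofReal {f : X × Y → ℝ} (hf : Measurable f) (hf0 : ∀ q, 0 ≤ f q)
    (hfi : Integrable f (μ.prod ν)) :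
    ((μ.prod ν).withDensity fun q => .ofReal (f q)).map Prod.snd
      = ν.withDensity fun y => .ofReal (∫ x, f (x, y) ∂μ) := by
  rw [map_snd_prod_withDensity hf.ennreal_ofReal]
  refine withDensity_congr_ae ?_
  filter_upwards [hfi.prod_left_ae] with y hy
  rw [ofReal_integral_eq_lintegral_ofReal hy (.of_forall fun _ => hf0 _)]

omit [SigmaFinite μ] in
theorem integrable_of_map_eq_withDensity {P : Measure E} [IsFiniteMeasure P] {T : E → X}
    (hT : Measurable T) {f : X → ℝ} (hf : Measurable f) (hf0 : ∀ x, 0 ≤ f x)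
    (hTf : P.map T = μ.withDensity fun x => .ofReal (f x)) : Integrable f μ := by
  refine ⟨hf.aestronglyMeasurable, ?_⟩
  rw [hasFiniteIntegral_iff_ofReal (.of_forall hf0), ← setLIntegral_univ,
    ← withDensity_apply _ .univ, ← hTf, Measure.map_apply hT .univ]
  exact measure_lt_top P _

theorem map_snd_comp_le_smul {P : Measure E} {T : E → X × Y} (hT : Measurable T) {f : X × Y → ℝ}
    (hf : Measurable f) (hTf : P.map T = (μ.prod ν).withDensity fun q => .ofReal (f q)) {C : ℝ≥0}
    (hfC : ∀ᵐ y ∂ν, ∫⁻ x, .ofReal (f (x, y)) ∂μ ≤ C) :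
    P.map (fun v => (T v).2) ≤ (C : ℝ≥0∞) • ν := by
  calc P.map (fun v => (T v).2) = (P.map T).map Prod.snd := (Measure.map_map measurable_snd hT).symm
    _ = ν.withDensity fun y => ∫⁻ x, .ofReal (f (x, y)) ∂μ := by
        rw [hTf, map_snd_prod_withDensity hf.ennreal_ofReal]
    _ ≤ ν.withDensity fun _ => (C : ℝ≥0∞) := withDensity_mono hfC
    _ = (C : ℝ≥0∞) • ν := withDensity_const _

end MarginalDensities

/-! ### Kernel smoothing -/

section KernelSmoothing

/-- The convolution kernel `h⁻ᵈ g(·/h)` on a space of dimension `d`. -/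
def scaledKernel {W : Type*} [NormedAddCommGroup W] [NormedSpace ℝ W] (g : W → ℝ) (h : ℝ)
    (w : W) : ℝ :=
  (h ^ Module.finrank ℝ W)⁻¹ * g (h⁻¹ • w)

/-- Smoothing of the density `f(x, w)` in its second variable by the kernel `g` at bandwidth `h`. -/
def kernelSmooth {X W : Type*} [NormedAddCommGroup W] [NormedSpace ℝ W] [MeasureSpace W]
    (g : W → ℝ) (h : ℝ) (f : X × W → ℝ) (q : X × W) : ℝ :=
  ∫ u, g u * f (q.1, q.2 - h • u)

variable {X W : Type*} [NormedAddCommGroup W] [NormedSpace ℝ W] [FiniteDimensional ℝ W]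
  [MeasureSpace W] [BorelSpace W] {g : W → ℝ} {h : ℝ} {f : X × W → ℝ}

omit [FiniteDimensional ℝ W] in
theorem measurable_scaledKernel (hg : Measurable g) : Measurable (scaledKernel g h) := by
  unfold scaledKernel
  fun_prop

omit [FiniteDimensional ℝ W] [MeasureSpace W] [BorelSpace W] in
theorem scaledKernel_nonneg (hg0 : ∀ u, 0 ≤ g u) (hh : 0 < h) (w : W) : 0 ≤ scaledKernel g h w :=
  mul_nonneg (by positivity) (hg0 _)

omit [FiniteDimensional ℝ W] [MeasureSpace W] [BorelSpace W] in
theorem scaledKernel_le {C : ℝ} (hgC : ∀ u, g u ≤ C) (hh : 0 < h) (w : W) :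
    scaledKernel g h w ≤ (h ^ Module.finrank ℝ W)⁻¹ * C :=
  mul_le_mul_of_nonneg_left (hgC _) (by positivity)

section Haar

variable [(volume : Measure W).IsAddHaarMeasure]

theorem integral_scaledKernel_sub_mul (hh : 0 < h) (φ : W → ℝ) (w : W) :
    ∫ w', scaledKernel g h (w - w') * φ w' = ∫ u, g u * φ (w - h • u) := by
  let G (w' : W) : ℝ := g (h⁻¹ • (w - w')) * φ w'
  calc ∫ w', scaledKernel g h (w - w') * φ w'
      = (h ^ Module.finrank ℝ W)⁻¹ * ∫ w', G w' := by
        simp only [scaledKernel, G, mul_assoc, integral_const_mul]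
    _ = ∫ u, G (w - h • u) := by
        rw [Measure.integral_comp_smul volume (fun u => G (w - u)) h, integral_sub_left_eq_self G,
          smul_eq_mul, abs_of_pos (by positivity)]
    _ = ∫ u, g u * φ (w - h • u) := by simp [G, inv_smul_smul₀ hh.ne']

theorem lintegral_ofReal_scaledKernel_sub (hg0 : ∀ u, 0 ≤ g u)
    (hg1 : ∫ u, g u = 1) (hh : 0 < h) (w : W) :
    ∫⁻ w', .ofReal (scaledKernel g h (w - w')) = 1 := by
  have mass : ∫ w', scaledKernel g h (w - w') = 1 := by
    simpa [hg1] using integral_scaledKernel_sub_mul (g := g) hh (fun _ => 1) w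
  rw [← ofReal_integral_eq_lintegral_ofReal (.of_integral_ne_zero (by simp [mass]))
    (.of_forall fun w' => scaledKernel_nonneg hg0 hh _), mass, ENNReal.ofReal_one]

end Haar

variable [MeasurableSpace X]

theorem measurable_kernelSmooth [SigmaFinite (volume : Measure W)] (hg : Measurable g)
    (hf : Measurable f) : Measurable (kernelSmooth g h f) := by
  have : Measurable fun a : (X × W) × W => g a.2 * f (a.1.1, a.1.2 - h • a.2) := by fun_prop
  exact this.stronglyMeasurable.integral_prod_right'.measurable

omit [FiniteDimensional ℝ W] in
theorem enorm_kernelSmooth_sub_le (hg : Measurable g) (hgi : Integrable g) (hg1 : ∫ u, g u = 1)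
    (hf : Measurable f) (q : X × W) :
    ‖kernelSmooth g h f q - f q‖ₑ ≤ ∫⁻ u, ‖g u‖ₑ * ‖f (q.1, q.2 - h • u) - f q‖ₑ := by
  simp only [← enorm_mul]
  by_cases hfin : ∫⁻ u, ‖g u * (f (q.1, q.2 - h • u) - f q)‖ₑ = ⊤
  · exact hfin ▸ le_top
  have hdiff : Integrable fun u => g u * (f (q.1, q.2 - h • u) - f q) :=
    ⟨by fun_prop, lt_top_iff_ne_top.2 hfin⟩
  have hshift : Integrable fun u => g u * f (q.1, q.2 - h • u) := by
    refine (hdiff.add (hgi.mul_const (f q))).congr (.of_forall fun u => ?_)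
    simp only [Pi.add_apply]
    ring
  have average : kernelSmooth g h f q - f q = ∫ u, g u * (f (q.1, q.2 - h • u) - f q) := by
    simp only [mul_sub]
    rw [integral_sub hshift (hgi.mul_const _), integral_mul_const, hg1, one_mul, kernelSmooth]
  rw [average]
  exact enorm_integral_le_lintegral_enorm _

end KernelSmoothing

section KernelSmoothingLimit

variable {X W : Type*} [NormedAddCommGroup X] [NormedSpace ℝ X] [FiniteDimensional ℝ X]
  [MeasureSpace X] [BorelSpace X] [(volume : Measure X).IsAddHaarMeasure]
  [NormedAddCommGroup W] [NormedSpace ℝ W] [FiniteDimensional ℝ W] [MeasureSpace W] [BorelSpace W]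
  [(volume : Measure W).IsAddHaarMeasure] {f : X × W → ℝ}

theorem tendsto_lintegral_enorm_translate_sub (hf : Integrable f (volume.prod volume)) :
    Tendsto (fun v : W => ∫⁻ q, ‖f (q.1, q.2 - v) - f q‖ₑ ∂volume.prod volume) (𝓝 0) (𝓝 0) := by
  have := FiniteDimensional.proper ℝ X
  have := FiniteDimensional.proper ℝ W
  let shift : C(W × (X × W), X × W) := ⟨fun a => (a.2.1, a.2.2 - a.1), by fun_prop⟩
  have mp (v : W) : MeasurePreserving (shift.curry v) (volume.prod volume) (volume.prod volume) :=
    (MeasurePreserving.id volume).prod (measurePreserving_sub_right volume v)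
  have continuous_translate := Filter.Tendsto.compMeasurePreservingLp
    (f := fun _ : W => (memLp_one_iff_integrable.2 hf).toLp f) tendsto_const_nhds
    (shift.curry.continuous.tendsto 0) mp (mp 0) (by simp)
  refine (tendsto_iff_edist_tendsto_0.1 continuous_translate).congr fun v => ?_
  rw [Lp.toLp_compMeasurePreserving, Lp.toLp_compMeasurePreserving, Lp.edist_toLp_toLp,
    eLpNorm_one_eq_lintegral_enorm]
  simp [shift]

omit [BorelSpace X] in
theorem lintegral_enorm_translate_sub_le (hf : Measurable f) (v : W) :
    ∫⁻ q, ‖f (q.1, q.2 - v) - f q‖ₑ ∂volume.prod volume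
      ≤ 2 * ∫⁻ q, ‖f q‖ₑ ∂volume.prod volume := by
  have mp : MeasurePreserving (fun q : X × W => (q.1, q.2 - v)) (volume.prod volume)
      (volume.prod volume) :=
    (MeasurePreserving.id volume).prod (measurePreserving_sub_right volume v)
  calc ∫⁻ q, ‖f (q.1, q.2 - v) - f q‖ₑ ∂volume.prod volume
      ≤ ∫⁻ q : X × W, (‖f (q.1, q.2 - v)‖ₑ + ‖f q‖ₑ) ∂volume.prod volume :=
        lintegral_mono fun q => enorm_sub_le
    _ = 2 * ∫⁻ q, ‖f q‖ₑ ∂volume.prod volume := by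
        rw [lintegral_add_right _ hf.enorm, mp.lintegral_comp hf.enorm, two_mul]

omit [BorelSpace X] in
theorem lintegral_enorm_kernelSmooth_sub_le {g : W → ℝ} (hg : Measurable g) (hgi : Integrable g)
    (hg1 : ∫ u, g u = 1) (hf : Measurable f) (h : ℝ) :
    ∫⁻ q, ‖kernelSmooth g h f q - f q‖ₑ ∂volume.prod volume
      ≤ ∫⁻ u, ‖g u‖ₑ * ∫⁻ q, ‖f (q.1, q.2 - h • u) - f q‖ₑ ∂volume.prod volume := by
  calc ∫⁻ q, ‖kernelSmooth g h f q - f q‖ₑ ∂volume.prod volume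
      ≤ ∫⁻ q : X × W, (∫⁻ u, ‖g u‖ₑ * ‖f (q.1, q.2 - h • u) - f q‖ₑ) ∂volume.prod volume :=
        lintegral_mono fun q => enorm_kernelSmooth_sub_le hg hgi hg1 hf q
    _ = ∫⁻ u, ∫⁻ q : X × W, ‖g u‖ₑ * ‖f (q.1, q.2 - h • u) - f q‖ₑ ∂volume.prod volume :=
        lintegral_lintegral_swap (by fun_prop : Measurable _).aemeasurable
    _ = ∫⁻ u, ‖g u‖ₑ * ∫⁻ q, ‖f (q.1, q.2 - h • u) - f q‖ₑ ∂volume.prod volume :=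
        lintegral_congr fun u => lintegral_const_mul _ (by fun_prop)

theorem tendsto_lintegral_enorm_kernelSmooth_sub {g : W → ℝ} (hg : Measurable g)
    (hgi : Integrable g) (hg1 : ∫ u, g u = 1) (hf : Measurable f)
    (hfi : Integrable f (volume.prod volume)) {h : ℕ → ℝ} (hh : Tendsto h atTop (𝓝 0)) :
    Tendsto (fun n => ∫⁻ q, ‖kernelSmooth g (h n) f q - f q‖ₑ ∂volume.prod volume)
      atTop (𝓝 0) := by
  have averaged : Tendsto (fun n => ∫⁻ u, ‖g u‖ₑ *
      ∫⁻ q, ‖f (q.1, q.2 - h n • u) - f q‖ₑ ∂volume.prod volume) atTop (𝓝 (∫⁻ _ : W, 0)) := by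
    refine tendsto_lintegral_of_dominated_convergence
      (fun u => ‖g u‖ₑ * (2 * ∫⁻ q, ‖f q‖ₑ ∂volume.prod volume)) (fun n => ?_)
      (fun n => .of_forall fun u => mul_le_mul_right (lintegral_enorm_translate_sub_le hf _) _) ?_
      (.of_forall fun u => ?_)
    · exact hg.enorm.mul (Measurable.lintegral_prod_right'
        (f := fun a : W × (X × W) => ‖f (a.2.1, a.2.2 - h n • a.1) - f a.2‖ₑ) (by fun_prop))
    · rw [lintegral_mul_const _ hg.enorm]
      exact ENNReal.mul_ne_top hgi.2.ne (ENNReal.mul_ne_top (by simp) hfi.2.ne)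
    · have shrink : Tendsto (fun n => h n • u) atTop (𝓝 0) := by simpa using hh.smul_const u
      simpa using ENNReal.Tendsto.const_mul (a := ‖g u‖ₑ)
        ((tendsto_lintegral_enorm_translate_sub hfi).comp shrink) (.inr (by simp))
  rw [lintegral_zero] at averaged
  exact tendsto_of_tendsto_of_tendsto_of_le_of_le tendsto_const_nhds averaged
    (fun _ => zero_le) fun n => lintegral_enorm_kernelSmooth_sub_le hg hgi hg1 hf (h n)

end KernelSmoothingLimit

theorem enorm_finsetProd {ι : Type*} (s : Finset ι) (f : ι → ℝ) :
    ‖∏ i ∈ s, f i‖ₑ = ∏ i ∈ s, ‖f i‖ₑ := by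
  simp only [enorm_eq_nnnorm, nnnorm_prod, ENNReal.ofNNReal_finsetProd]

section LocalMeans

variable {ι E X : Type*} [Fintype ι] [MeasurableSpace E] [MeasurableSpace X] {P : Measure E}
  {ν : Measure X} [SigmaFinite ν] {T : E → X} {C B : ℝ≥0} {ψ : (ι → X) → ℝ}

/-- The weights `k n v`, bounded by `M n` and of mass at most `C`, localize `P` near `v` as `n → ∞`:
the law of `T` under `P` weighted by `k n v` has a density with respect to `ν`, which converges
to `a v` in `L¹(P ⊗ ν)`. -/
structure IsLocalizing (P : Measure E) (ν : Measure X) (T : E → X) (C : ℝ≥0) (M : ℕ → ℝ≥0)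
    (k : ℕ → E → E → ℝ) (a : E → X → ℝ) : Prop where
  measurable : ∀ n, Measurable (Function.uncurry (k n))
  nonneg : ∀ n v w, 0 ≤ k n v w
  le : ∀ n v w, k n v w ≤ M n
  lintegral_le : ∀ n v, ∫⁻ w, .ofReal (k n v w) ∂P ≤ C
  measurable_limit : Measurable (Function.uncurry a)
  lintegral_limit_le : ∀ᵐ v ∂P, ∫⁻ x, ‖a v x‖ₑ ∂ν ≤ C
  exists_density : ∃ d : ℕ → E → X → ℝ, (∀ n, Measurable (Function.uncurry (d n))) ∧
    (∀ n v x, 0 ≤ d n v x) ∧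
    (∀ n v, (P.withDensity fun w => .ofReal (k n v w)).map T
      = ν.withDensity fun x => .ofReal (d n v x)) ∧
    Tendsto (fun n => ∫⁻ v, ∫⁻ x, ‖d n v x - a v x‖ₑ ∂ν ∂P) atTop (𝓝 0)

theorem measurable_integral_prod_mul {a : ι → E → X → ℝ}
    (ha : ∀ l, Measurable (Function.uncurry (a l))) (hψ : Measurable ψ) :
    Measurable fun v => ∫ x, (∏ l, a l v (x l)) * ψ x ∂Measure.pi fun _ => ν := by
  have integrand : Measurable fun q : E × (ι → X) => (∏ l, a l q.1 (q.2 l)) * ψ q.2 :=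
    (Finset.measurable_prod _ fun l _ => (ha l).comp
      (f := fun q : E × (ι → X) => (q.1, q.2 l)) (by fun_prop)).mul (by fun_prop)
  exact integrand.stronglyMeasurable.integral_prod_right'.measurable

theorem enorm_integral_prod_mul_le {a : ι → X → ℝ} (ha : ∀ l, Measurable (a l))
    (haC : ∀ l, ∫⁻ x, ‖a l x‖ₑ ∂ν ≤ C) (hψB : ∀ x, ‖ψ x‖ₑ ≤ B) :
    ‖∫ x, (∏ l, a l (x l)) * ψ x ∂Measure.pi fun _ => ν‖ₑ ≤ C ^ Fintype.card ι * B := by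
  calc ‖∫ x, (∏ l, a l (x l)) * ψ x ∂Measure.pi fun _ => ν‖ₑ
      ≤ ∫⁻ x : ι → X, (∏ l, ‖a l (x l)‖ₑ) * B ∂Measure.pi fun _ => ν := by
        refine (enorm_integral_le_lintegral_enorm _).trans (lintegral_mono fun x => ?_)
        simp only [enorm_mul, enorm_finsetProd]
        gcongr
        exact hψB x
    _ = (∏ l, ∫⁻ x, ‖a l x‖ₑ ∂ν) * B := by
        rw [lintegral_mul_const _ (by fun_prop),
          lintegral_pi_prod (fun _ => ν) fun l => (ha l).enorm]
    _ ≤ C ^ Fintype.card ι * B := by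
        rw [← Finset.card_univ, ← Finset.prod_const]
        gcongr with l
        exact haC l

namespace IsLocalizing

variable {M : ι → ℕ → ℝ≥0} {k : ι → ℕ → E → E → ℝ} {a : ι → E → X → ℝ}

theorem integrable_limit [IsFiniteMeasure P]
    (hk : ∀ l, IsLocalizing P ν T C (M l) (k l) (a l)) (hψ : Measurable ψ)
    (hψB : ∀ x, ‖ψ x‖ₑ ≤ B) :
    Integrable (fun v => ∫ x, (∏ l, a l v (x l)) * ψ x ∂Measure.pi fun _ => ν) P := by
  refine .of_bound (measurable_integral_prod_mul (fun l => (hk l).measurable_limit)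
    hψ).aestronglyMeasurable (C ^ Fintype.card ι * B : ℝ≥0) ?_
  filter_upwards [ae_all_iff.2 fun l => (hk l).lintegral_limit_le] with v hv
  have := enorm_integral_prod_mul_le (fun l => (hk l).measurable_limit.of_uncurry_left) hv hψB
  exact_mod_cast this

theorem tendsto_lintegral_enorm_mean_sub [IsProbabilityMeasure P]
    (hk : ∀ l, IsLocalizing P ν T C (M l) (k l) (a l)) (hT : Measurable T) (hψ : Measurable ψ)
    (hψB : ∀ x, ‖ψ x‖ₑ ≤ B) :
    Tendsto (fun n => ∫⁻ v, ‖(∫ w, (∏ l, k l n v (w l)) * ψ (T ∘ w) ∂Measure.pi fun _ => P)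
      - ∫ x, (∏ l, a l v (x l)) * ψ x ∂Measure.pi fun _ => ν‖ₑ ∂P) atTop (𝓝 0) := by
  choose d hdm hd0 hdlaw hdlim using fun l => (hk l).exists_density
  have hda (l n) : Measurable fun v => ∫⁻ x, ‖d l n v x - a l v x‖ₑ ∂ν :=
    ((hdm l n).sub (hk l).measurable_limit).enorm.lintegral_prod_right'
  have mean_eq (n v) : ∫ w, (∏ l, k l n v (w l)) * ψ (T ∘ w) ∂Measure.pi (fun _ => P)
      = ∫ x, (∏ l, d l n v (x l)) * ψ x ∂Measure.pi fun _ => ν := by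
    rw [integral_prod_mul_comp P (fun l => ((hk l).measurable n).of_uncurry_left)
      (fun l => (hk l).nonneg n v) hT (fun l => hdlaw l n v) hψ]
    exact integral_pi_withDensity_ofReal _ (fun l => (hdm l n).of_uncurry_left)
      (fun l => hd0 l n v) ψ
  have mass (l n v) : ∫⁻ x, ‖d l n v x‖ₑ ∂ν ≤ C := by
    simp only [Real.enorm_of_nonneg (hd0 l n v _)]
    rw [← setLIntegral_univ, ← withDensity_apply _ .univ, ← hdlaw, Measure.map_apply hT .univ,
      Set.preimage_univ, withDensity_apply _ .univ, setLIntegral_univ]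
    exact (hk l).lintegral_le n v
  have bound (n) : ∫⁻ v, ‖(∫ w, (∏ l, k l n v (w l)) * ψ (T ∘ w) ∂Measure.pi fun _ => P)
        - ∫ x, (∏ l, a l v (x l)) * ψ x ∂Measure.pi fun _ => ν‖ₑ ∂P
      ≤ B * ((C + C) ^ (Fintype.card ι - 1) *
        ∑ l, ∫⁻ v, ∫⁻ x, ‖d l n v x - a l v x‖ₑ ∂ν ∂P) := by
    rw [← lintegral_finsetSum _ fun l _ => hda l n, ← lintegral_const_mul _ (by fun_prop),
      ← lintegral_const_mul _ (by fun_prop)]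
    refine lintegral_mono_ae ?_
    filter_upwards [ae_all_iff.2 fun l => (hk l).lintegral_limit_le] with v hv
    rw [mean_eq]
    exact enorm_integral_prod_mul_sub_le (fun l => (hdm l n).of_uncurry_left)
      (fun l => (hk l).measurable_limit.of_uncurry_left) (fun l => mass l n v) hv hψ hψB
  have vanish : Tendsto (fun n => B * ((C + C) ^ (Fintype.card ι - 1) *
      ∑ l, ∫⁻ v, ∫⁻ x, ‖d l n v x - a l v x‖ₑ ∂ν ∂P)) atTop (𝓝 0) := by
    have sum_lim := tendsto_finsetSum Finset.univ fun l _ => hdlim l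
    rw [Finset.sum_const_zero] at sum_lim
    have finite : ((C : ℝ≥0∞) + C) ^ (Fintype.card ι - 1) ≠ ⊤ := by finiteness
    simpa using ENNReal.Tendsto.const_mul
      (ENNReal.Tendsto.const_mul sum_lim (.inr finite)) (.inr ENNReal.coe_ne_top)
  exact tendsto_of_tendsto_of_tendsto_of_le_of_le tendsto_const_nhds vanish
    (fun _ => zero_le) bound

omit [SigmaFinite ν] in
theorem productDominated [Nonempty ι] (hk : ∀ l, IsLocalizing P ν T C (M l) (k l) (a l))
    (hT : Measurable T) (hψ : Measurable ψ) (hψB : ∀ x, ‖ψ x‖ₑ ≤ B) (n : ℕ) (v : E) :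
    ProductDominated P (max 1 B * C) (max 1 B * ∑ l, M l n)
      fun w => (∏ l, k l n v (w l)) * ψ (T ∘ w) := by
  have hkm (l) : Measurable (k l n v) := ((hk l).measurable n).of_uncurry_left
  refine ⟨by fun_prop, fun l w => max 1 B * .ofReal (k l n v w), fun l => by fun_prop,
    fun l w => ?_, fun l => ?_, fun w => ?_⟩
  · have le_sum : M l n ≤ ∑ l, M l n :=
      Finset.single_le_sum_of_canonicallyOrdered (f := fun l => M l n) (Finset.mem_univ l)
    rw [ENNReal.coe_mul, ENNReal.coe_max, ENNReal.coe_one]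
    refine mul_le_mul_right ?_ _
    exact ENNReal.ofReal_le_coe.2 (((hk l).le n v w).trans (NNReal.coe_le_coe.2 le_sum))
  · rw [lintegral_const_mul _ (by fun_prop)]
    rw [ENNReal.coe_mul]
    gcongr
    exact (hk l).lintegral_le n v
  · simp only [enorm_mul, enorm_finsetProd, Finset.prod_mul_distrib, Finset.prod_const,
      Real.enorm_of_nonneg ((hk _).nonneg n v _)]
    rw [mul_comm]
    gcongr
    calc ‖ψ (T ∘ w)‖ₑ ≤ (max 1 B : ℝ≥0) := (hψB _).trans (by gcongr; exact le_max_right _ _)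
      _ ≤ (max 1 B : ℝ≥0) ^ #Finset.univ :=
        le_self_pow₀ (by exact_mod_cast le_max_left 1 B)
          (Finset.card_pos.2 Finset.univ_nonempty).ne'

end IsLocalizing

theorem tendsto_lintegral_enorm_localized_uStatistic {Ω : Type*} [MeasurableSpace Ω]
    {μ : Measure Ω} [IsProbabilityMeasure μ] [IsProbabilityMeasure P] {V : ℕ → Ω → E}
    (hVm : ∀ i, Measurable (V i)) (hV : iIndepFun V μ) (hlaw : ∀ i, μ.map (V i) = P)
    {r : ℕ} [NeZero r] {M : Fin r → ℕ → ℝ≥0} {k : Fin r → ℕ → E → E → ℝ} {a : Fin r → E → X → ℝ}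
    (hk : ∀ l, IsLocalizing P ν T C (M l) (k l) (a l)) (hT : Measurable T)
    (hM : ∀ l, Tendsto (fun n => M l n / n) atTop (𝓝 0)) {ψ : (Fin r → X) → ℝ}
    (hψ : Measurable ψ) (hψB : ∀ x, ‖ψ x‖ₑ ≤ B) :
    Tendsto (fun n => ∫⁻ ω, ‖uStatistic
        (fun w : Fin (r + 1) → E => (∏ l, k l n (w 0) (Fin.tail w l)) * ψ (T ∘ Fin.tail w))
        (fun i : Fin n => V i ω)
      - ∫ v, ∫ x, (∏ l, a l v (x l)) * ψ x ∂Measure.pi (fun _ => ν) ∂P‖ₑ ∂μ) atTop (𝓝 0) := by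
  refine tendsto_lintegral_enorm_uStatistic_sub_integral hVm hV hlaw
    (F := fun n v w => (∏ l, k l n v (w l)) * ψ (T ∘ w)) (fun n => ?_)
    (IsLocalizing.productDominated hk hT hψ hψB) ?_
    (measurable_integral_prod_mul (fun l => (hk l).measurable_limit) hψ)
    (IsLocalizing.integrable_limit hk hψ hψB)
    (IsLocalizing.tendsto_lintegral_enorm_mean_sub hk hT hψ hψB)
  · exact (Finset.measurable_prod _ fun l _ => ((hk l).measurable n).comp
      (f := fun q : E × (Fin r → E) => (q.1, q.2 l)) (by fun_prop)).mul (by fun_prop)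
  · have sum_lim := (tendsto_finsetSum Finset.univ fun l _ => hM l).const_mul (max 1 B)
    simpa [mul_div_assoc, Finset.sum_div] using sum_lim

theorem tendstoInMeasure_localized_uStatistic {Ω : Type*} [MeasurableSpace Ω]
    {μ : Measure Ω} [IsProbabilityMeasure μ] [IsProbabilityMeasure P] {V : ℕ → Ω → E}
    (hVm : ∀ i, Measurable (V i)) (hV : iIndepFun V μ) (hlaw : ∀ i, μ.map (V i) = P)
    {r : ℕ} [NeZero r] {M : Fin r → ℕ → ℝ≥0} {k : Fin r → ℕ → E → E → ℝ} {a : Fin r → E → X → ℝ}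
    (hk : ∀ l, IsLocalizing P ν T C (M l) (k l) (a l)) (hT : Measurable T)
    (hM : ∀ l, Tendsto (fun n => M l n / n) atTop (𝓝 0)) {ψ : (Fin r → X) → ℝ}
    (hψ : Measurable ψ) (hψB : ∀ x, ‖ψ x‖ₑ ≤ B) :
    TendstoInMeasure μ (fun n ω => uStatistic
        (fun w : Fin (r + 1) → E => (∏ l, k l n (w 0) (Fin.tail w l)) * ψ (T ∘ Fin.tail w))
        (fun i : Fin n => V i ω)) atTop
      fun _ => ∫ v, ∫ x, (∏ l, a l v (x l)) * ψ x ∂Measure.pi (fun _ => ν) ∂P := by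
  have core_measurable (n) : Measurable fun w : Fin (r + 1) → E =>
      (∏ l, k l n (w 0) (Fin.tail w l)) * ψ (T ∘ Fin.tail w) := by
    unfold Fin.tail
    exact (Finset.measurable_prod _ fun l _ => ((hk l).measurable n).comp
      (f := fun w : Fin (r + 1) → E => (w 0, w l.succ)) (by fun_prop)).mul (by fun_prop)
  have uStatistic_measurable (n) : Measurable fun ω => uStatistic
      (fun w : Fin (r + 1) → E => (∏ l, k l n (w 0) (Fin.tail w l)) * ψ (T ∘ Fin.tail w))
      (fun i : Fin n => V i ω) :=
    measurable_uStatistic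
      (F := fun _ w => (∏ l, k l n (w 0) (Fin.tail w l)) * ψ (T ∘ Fin.tail w))
      ((core_measurable n).comp measurable_snd) (by fun_prop)
  refine tendstoInMeasure_of_tendsto_eLpNorm one_ne_zero
    (fun n => (uStatistic_measurable n).aestronglyMeasurable) aestronglyMeasurable_const ?_
  simp only [eLpNorm_one_eq_lintegral_enorm, Pi.sub_apply]
  exact tendsto_lintegral_enorm_localized_uStatistic hVm hV hlaw hk hT hM hψ hψB

end LocalMeans

section KernelLocalization

variable {E X W : Type*} [MeasurableSpace E] [MeasureSpace X] [SigmaFinite (volume : Measure X)]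
  [NormedAddCommGroup W] [NormedSpace ℝ W] [FiniteDimensional ℝ W] [MeasureSpace W] [BorelSpace W]
  [(volume : Measure W).IsAddHaarMeasure] {P : Measure E} {T : E → X × W} {f : X × W → ℝ}
  {g : W → ℝ}

theorem map_withDensity_scaledKernel [IsFiniteMeasure P] (hT : Measurable T) (hf : Measurable f)
    (hf0 : ∀ q, 0 ≤ f q)
    (hTf : P.map T = (volume.prod volume).withDensity fun q => .ofReal (f q))
    (hg : Measurable g) (hg0 : ∀ u, 0 ≤ g u) {M : ℝ} (hgM : ∀ u, g u ≤ M) {h : ℝ} (hh : 0 < h)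
    (w : W) :
    (P.withDensity fun v => .ofReal (scaledKernel g h (w - (T v).2))).map (fun v => (T v).1)
      = volume.withDensity fun x => .ofReal (kernelSmooth g h f (x, w)) := by
  let κ (q : X × W) : ℝ := scaledKernel g h (w - q.2)
  have hκ : Measurable κ := (measurable_scaledKernel hg).comp (by fun_prop)
  have hκ0 (q) : 0 ≤ κ q := scaledKernel_nonneg hg0 hh _
  have hκf : Integrable (fun q => κ q * f q) (volume.prod volume) :=
    (integrable_of_map_eq_withDensity hT hf hf0 hTf).bdd_mul hκ.aestronglyMeasurable
      (.of_forall fun q => (Real.norm_of_nonneg (hκ0 q)).trans_le (scaledKernel_le hgM hh _))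
  calc (P.withDensity fun v => .ofReal (κ (T v))).map (Prod.fst ∘ T)
      = ((P.map T).withDensity fun q => .ofReal (κ q)).map Prod.fst := by
        rw [← Measure.map_map measurable_fst hT, map_withDensity_comp P hT hκ.ennreal_ofReal]
    _ = ((volume.prod volume).withDensity fun q => .ofReal (κ q * f q)).map Prod.fst := by
        rw [hTf, ← withDensity_mul _ hf.ennreal_ofReal hκ.ennreal_ofReal]
        congr with q : 2
        rw [Pi.mul_apply, mul_comm, ENNReal.ofReal_mul (hκ0 q)]
    _ = volume.withDensity fun x => .ofReal (kernelSmooth g h f (x, w)) := by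
        rw [map_fst_prod_withDensity_ofReal (f := fun q => κ q * f q) (by fun_prop)
          (fun q => mul_nonneg (hκ0 q) (hf0 q)) hκf]
        congr with x : 2
        exact congrArg _ (integral_scaledKernel_sub_mul hh (fun w' => f (x, w')) w)

theorem isLocalizing_scaledKernel {X : Type*} [NormedAddCommGroup X] [NormedSpace ℝ X]
    [FiniteDimensional ℝ X] [MeasureSpace X] [BorelSpace X] [(volume : Measure X).IsAddHaarMeasure]
    {T : E → X × W} {f : X × W → ℝ} [IsFiniteMeasure P] (hT : Measurable T) (hf : Measurable f)
    (hf0 : ∀ q, 0 ≤ f q)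
    (hTf : P.map T = (volume.prod volume).withDensity fun q => .ofReal (f q))
    {C : ℝ≥0} (hfC : ∀ᵐ w, ∫⁻ x, .ofReal (f (x, w)) ≤ C)
    (hg : Measurable g) (hg0 : ∀ u, 0 ≤ g u) {M : ℝ} (hgM : ∀ u, g u ≤ M) (hg1 : ∫ u, g u = 1)
    {h : ℕ → ℝ} (hh0 : ∀ n, 0 < h n) (hh : Tendsto h atTop (𝓝 0)) :
    IsLocalizing P volume (fun v => (T v).1) C
      (fun n => ((h n ^ Module.finrank ℝ W)⁻¹ * M).toNNReal)
      (fun n v v' => scaledKernel g (h n) ((T v).2 - (T v').2)) (fun v x => f (x, (T v).2)) := by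
  have hgi : Integrable g := .of_integral_ne_zero (by simp [hg1])
  have map_le := map_snd_comp_le_smul hT hf hTf hfC
  have lintegral_comp_le {F : W → ℝ≥0∞} (hF : Measurable F) :
      ∫⁻ v, F (T v).2 ∂P ≤ C * ∫⁻ w, F w := by
    rw [← lintegral_map hF hT.snd, ← smul_eq_mul, ← lintegral_smul_measure]
    exact lintegral_mono' map_le le_rfl
  refine ⟨fun n => (measurable_scaledKernel hg).comp (by fun_prop),
    fun n v v' => scaledKernel_nonneg hg0 (hh0 n) _,
    fun n v v' => (scaledKernel_le hgM (hh0 n) _).trans (Real.le_coe_toNNReal _),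
    fun n v => ?_, by fun_prop, ?_,
    fun n v x => kernelSmooth g (h n) f (x, (T v).2), fun n => ?_, fun n v x => ?_,
    fun n v => map_withDensity_scaledKernel hT hf hf0 hTf hg hg0 hgM (hh0 n) _, ?_⟩
  · refine (lintegral_comp_le (F := fun w => .ofReal (scaledKernel g (h n) ((T v).2 - w)))
      ((measurable_scaledKernel hg).comp (by fun_prop)).ennreal_ofReal).trans_eq ?_
    rw [lintegral_ofReal_scaledKernel_sub hg0 hg1 (hh0 n), mul_one]
  · have law_ac : P.map (fun v => (T v).2) ≪ volume :=
      (Measure.absolutelyContinuous_of_le map_le).trans Measure.smul_absolutelyContinuous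
    filter_upwards [ae_of_ae_map hT.snd.aemeasurable (law_ac.ae_le hfC)] with v hv
    simpa only [Real.enorm_of_nonneg (hf0 _)] using hv
  · exact (measurable_kernelSmooth hg hf).comp (f := fun q : E × X => (q.2, (T q.1).2))
      (by fun_prop)
  · exact integral_nonneg fun u => mul_nonneg (hg0 u) (hf0 _)
  · have smooth_lim := ENNReal.Tendsto.const_mul (a := (C : ℝ≥0∞))
      (tendsto_lintegral_enorm_kernelSmooth_sub hg hgi hg1 hf
        (integrable_of_map_eq_withDensity hT hf hf0 hTf) hh) (.inr ENNReal.coe_ne_top)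
    rw [mul_zero] at smooth_lim
    refine tendsto_of_tendsto_of_tendsto_of_le_of_le tendsto_const_nhds smooth_lim
      (fun _ => zero_le) fun n => ?_
    have hdiff : Measurable fun q => ‖kernelSmooth g (h n) f q - f q‖ₑ :=
      ((measurable_kernelSmooth hg hf).sub hf).enorm
    rw [lintegral_prod_symm _ hdiff.aemeasurable]
    exact lintegral_comp_le hdiff.lintegral_prod_left'

end KernelLocalization

/-! ### Unbiasedness of the ball divergence core -/

section BallDivergence

variable {d : ℕ}

@[fun_prop]
theorem measurable_ballδ {α : Type*} [MeasurableSpace α] {u v s : α → Euc d} (hu : Measurable u)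
    (hv : Measurable v) (hs : Measurable s) : Measurable fun t => ballδ (u t) (v t) (s t) :=
  Measurable.ite (measurableSet_le (hu.dist hs) (hu.dist hv)) measurable_const measurable_const

theorem ballδ_mem_Icc (u v s : Euc d) : ballδ u v s ∈ Set.Icc (0 : ℝ) 1 := by
  unfold ballδ
  split_ifs <;> simp

theorem ballδ_eq_indicator (u v : Euc d) :
    ballδ u v = (Metric.closedBall u (dist v u)).indicator 1 := by
  funext s
  simp [ballδ, Set.indicator, dist_comm u]

theorem ballφA_eq_mul (u₁ u₂ u₃ u₄ v₃ v₄ : Euc d) :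
    ballφA u₁ u₂ u₃ u₄ v₃ v₄
      = (ballδ u₁ u₂ u₃ - ballδ u₁ u₂ v₄) * (ballδ u₁ u₂ u₄ - ballδ u₁ u₂ v₃) := by
  unfold ballφA ballη
  ring

theorem abs_ballφA_le (u₁ u₂ u₃ u₄ v₃ v₄ : Euc d) : |ballφA u₁ u₂ u₃ u₄ v₃ v₄| ≤ 1 := by
  have abs_sub_le (s t : Euc d) : |ballδ u₁ u₂ s - ballδ u₁ u₂ t| ≤ 1 :=
    abs_sub_le_of_le_of_le (ballδ_mem_Icc u₁ u₂ s).1 (ballδ_mem_Icc u₁ u₂ s).2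
      (ballδ_mem_Icc u₁ u₂ t).1 (ballδ_mem_Icc u₁ u₂ t).2 |>.trans (by norm_num)
  rw [ballφA_eq_mul, abs_mul]
  exact mul_le_one₀ (abs_sub_le _ _) (abs_nonneg _) (abs_sub_le _ _)

theorem abs_ballφ_le (u v : Fin 4 → Euc d) : |ballφ u v| ≤ 2 :=
  (abs_add_le _ _).trans <|
    (add_le_add (abs_ballφA_le _ _ _ _ _ _) (abs_ballφA_le _ _ _ _ _ _)).trans_eq one_add_one_eq_two

theorem ballφ'_eq_expect (u v : Fin 4 → Euc d) :
    ballφ' u v = 𝔼 τ : Equiv.Perm (Fin 4), 𝔼 σ : Equiv.Perm (Fin 4), ballφ (u ∘ τ) (v ∘ σ) := by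
  simp only [ballφ', Fintype.expect_eq_sum_div_card, Fintype.card_perm, Fintype.card_fin,
    ← Finset.sum_div]
  push_cast
  ring

theorem abs_ballφ'_le (u v : Fin 4 → Euc d) : |ballφ' u v| ≤ 2 := by
  rw [ballφ'_eq_expect]
  refine (Finset.abs_expect_le _ _).trans (Finset.expect_le Finset.univ_nonempty fun τ _ => ?_)
  exact (Finset.abs_expect_le _ _).trans
    (Finset.expect_le Finset.univ_nonempty fun σ _ => abs_ballφ_le _ _)

@[fun_prop]
theorem measurable_ballφA {α : Type*} [MeasurableSpace α] {u₁ u₂ u₃ u₄ v₃ v₄ : α → Euc d}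
    (hu₁ : Measurable u₁) (hu₂ : Measurable u₂) (hu₃ : Measurable u₃) (hu₄ : Measurable u₄)
    (hv₃ : Measurable v₃) (hv₄ : Measurable v₄) :
    Measurable fun t => ballφA (u₁ t) (u₂ t) (u₃ t) (u₄ t) (v₃ t) (v₄ t) := by
  unfold ballφA ballη
  fun_prop

@[fun_prop]
theorem measurable_ballφ {α : Type*} [MeasurableSpace α] {u v : α → Fin 4 → Euc d}
    (hu : Measurable u) (hv : Measurable v) : Measurable fun t => ballφ (u t) (v t) := by
  unfold ballφ
  fun_prop

@[fun_prop]
theorem measurable_ballφ' {α : Type*} [MeasurableSpace α] {u v : α → Fin 4 → Euc d}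
    (hu : Measurable u) (hv : Measurable v) : Measurable fun t => ballφ' (u t) (v t) := by
  unfold ballφ' Function.comp
  fun_prop

variable {A B : Measure (Euc d)} [IsProbabilityMeasure A] [IsProbabilityMeasure B]

omit [IsProbabilityMeasure B] in
theorem integrable_ballδ (u v : Euc d) : Integrable (ballδ u v) A :=
  .of_mem_Icc 0 1 (by fun_prop) (.of_forall (ballδ_mem_Icc u v))

omit [IsProbabilityMeasure A] in
theorem integral_ballδ (u v : Euc d) :
    ∫ s, ballδ u v s ∂A = (A (Metric.closedBall u (dist v u))).toReal := by
  rw [ballδ_eq_indicator, integral_indicator_one Metric.isClosed_closedBall.measurableSet]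
  rfl

theorem integral_ballδ_sub (u v : Euc d) :
    ∫ r, (ballδ u v r.1 - ballδ u v r.2) ∂A.prod B
      = (A (Metric.closedBall u (dist v u))).toReal
        - (B (Metric.closedBall u (dist v u))).toReal := by
  rw [integral_sub ((integrable_ballδ u v).comp_fst B) ((integrable_ballδ u v).comp_snd A),
    integral_fun_fst, integral_fun_snd, integral_ballδ, integral_ballδ]
  simp

theorem integral_prod_ballφA :
    ∫ q : (Euc d × Euc d) × ((Euc d × Euc d) × (Euc d × Euc d)),
        ballφA q.1.1 q.1.2 q.2.1.1 q.2.2.1 q.2.2.2 q.2.1.2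
        ∂(A.prod A).prod ((A.prod B).prod (A.prod B))
      = ∫ u, ∫ v, ((A (Metric.closedBall u (dist v u))).toReal
          - (B (Metric.closedBall u (dist v u))).toReal) ^ 2 ∂A ∂A := by
  have hint : Integrable (fun q : (Euc d × Euc d) × ((Euc d × Euc d) × (Euc d × Euc d)) =>
      ballφA q.1.1 q.1.2 q.2.1.1 q.2.2.1 q.2.2.2 q.2.1.2)
      ((A.prod A).prod ((A.prod B).prod (A.prod B))) := by
    refine .of_bound (by fun_prop : Measurable _).aestronglyMeasurable 1
      (.of_forall fun q => abs_ballφA_le _ _ _ _ _ _)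
  have inner (q : Euc d × Euc d) :
      ∫ r : (Euc d × Euc d) × (Euc d × Euc d), ballφA q.1 q.2 r.1.1 r.2.1 r.2.2 r.1.2
          ∂(A.prod B).prod (A.prod B)
        = ((A (Metric.closedBall q.1 (dist q.2 q.1))).toReal
          - (B (Metric.closedBall q.1 (dist q.2 q.1))).toReal) ^ 2 := by
    simp only [ballφA_eq_mul]
    rw [integral_prod_mul (fun r : Euc d × Euc d => ballδ q.1 q.2 r.1 - ballδ q.1 q.2 r.2)
      fun r : Euc d × Euc d => ballδ q.1 q.2 r.1 - ballδ q.1 q.2 r.2, integral_ballδ_sub, sq]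
  have outer := hint.integral_prod_left
  simp only [inner] at outer
  rw [integral_prod _ hint]
  simp only [inner]
  exact integral_prod _ outer

theorem measurePreserving_prod_pi_fin_six {E : Type*} [MeasurableSpace E] (ν : Fin 6 → Measure E)
    [∀ i, SigmaFinite (ν i)] :
    MeasurePreserving
      (fun q : (E × E) × ((E × E) × (E × E)) =>
        ![q.1.1, q.1.2, q.2.1.1, q.2.2.1, q.2.2.2, q.2.1.2])
      (((ν 0).prod (ν 1)).prod (((ν 2).prod (ν 5)).prod ((ν 3).prod (ν 4)))) (Measure.pi ν) := by
  have hm : Measurable fun q : (E × E) × ((E × E) × (E × E)) =>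
      ![q.1.1, q.1.2, q.2.1.1, q.2.2.1, q.2.2.2, q.2.1.2] :=
    measurable_pi_iff.2 fun i => by fin_cases i <;> (dsimp; fun_prop)
  refine ⟨hm, (Measure.pi_eq fun s hs => ?_).symm⟩
  have preimage_pi : (fun q : (E × E) × ((E × E) × (E × E)) =>
        ![q.1.1, q.1.2, q.2.1.1, q.2.2.1, q.2.2.2, q.2.1.2]) ⁻¹' Set.univ.pi s
      = (s 0 ×ˢ s 1) ×ˢ ((s 2 ×ˢ s 5) ×ˢ (s 3 ×ˢ s 4)) := by
    ext q
    simp [Fin.forall_fin_succ]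
    tauto
  rw [Measure.map_apply hm (.univ_pi hs), preimage_pi]
  simp only [Measure.prod_prod, Fin.prod_univ_six]
  ring

variable {κ : Type*} [Fintype κ] {ν : κ → Measure (Euc d)} [∀ i, IsProbabilityMeasure (ν i)]
  {a b : Fin 4 → κ}

theorem integral_pi_ballφA (hab : Function.Injective (Sum.elim a b)) (ha : ∀ l, ν (a l) = A)
    (hb : ∀ l, ν (b l) = B) :
    ∫ x, ballφA (x (a 0)) (x (a 1)) (x (a 2)) (x (a 3)) (x (b 2)) (x (b 3)) ∂Measure.pi ν
      = ∫ u, ∫ v, ((A (Metric.closedBall u (dist v u))).toReal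
          - (B (Metric.closedBall u (dist v u))).toReal) ^ 2 ∂A ∂A := by
  let i : Fin 6 → κ := ![a 0, a 1, a 2, a 3, b 2, b 3]
  let e : Fin 6 → Fin 4 ⊕ Fin 4 := ![.inl 0, .inl 1, .inl 2, .inl 3, .inr 2, .inr 3]
  have hi : Function.Injective i := by
    have : i = Sum.elim a b ∘ e := by funext l; fin_cases l <;> rfl
    exact this ▸ hab.comp (by decide)
  let F (w : Fin 6 → Euc d) : ℝ := ballφA (w 0) (w 1) (w 2) (w 3) (w 4) (w 5)
  have hF {m : Measure (Fin 6 → Euc d)} : AEStronglyMeasurable F m :=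
    (by fun_prop : Measurable F).aestronglyMeasurable
  have restrict := measurePreserving_comp_injective ν hi
  have : ∀ l, IsProbabilityMeasure ((ν ∘ i) l) := fun l => by dsimp; infer_instance
  have regroup := measurePreserving_prod_pi_fin_six (ν ∘ i)
  calc ∫ x, F (x ∘ i) ∂Measure.pi ν = ∫ w, F w ∂Measure.pi (ν ∘ i) := by
        rw [← restrict.map_eq, integral_map restrict.aemeasurable hF]
    _ = ∫ u, ∫ v, ((A (Metric.closedBall u (dist v u))).toReal
          - (B (Metric.closedBall u (dist v u))).toReal) ^ 2 ∂A ∂A := by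
        rw [← regroup.map_eq, integral_map regroup.aemeasurable hF, ← integral_prod_ballφA]
        simp only [F, i, Function.comp_apply, Matrix.cons_val, ha, hb]

theorem integral_pi_ballφ (hab : Function.Injective (Sum.elim a b)) (ha : ∀ l, ν (a l) = A)
    (hb : ∀ l, ν (b l) = B) : ∫ x, ballφ (x ∘ a) (x ∘ b) ∂Measure.pi ν = ballDiv A B := by
  have hba : Function.Injective (Sum.elim b a) := by
    rw [Sum.elim_injective] at hab ⊢
    exact ⟨hab.2.1, hab.1, fun k l => (hab.2.2 l k).symm⟩
  have bounded (a b : Fin 4 → κ) : Integrable (fun x => ballφA (x (a 0)) (x (a 1)) (x (a 2))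
      (x (a 3)) (x (b 2)) (x (b 3))) (Measure.pi ν) :=
    .of_bound (by fun_prop : Measurable _).aestronglyMeasurable 1
      (.of_forall fun x => abs_ballφA_le _ _ _ _ _ _)
  simp only [ballφ, Function.comp_apply]
  rw [integral_add (bounded a b) (bounded b a), integral_pi_ballφA hab ha hb,
    integral_pi_ballφA hba hb ha, ballDiv]
  simp only [sub_sq_comm (B _).toReal]

theorem integral_pi_ballφ' (hab : Function.Injective (Sum.elim a b)) (ha : ∀ l, ν (a l) = A)
    (hb : ∀ l, ν (b l) = B) : ∫ x, ballφ' (x ∘ a) (x ∘ b) ∂Measure.pi ν = ballDiv A B := by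
  have permuted (τ σ : Equiv.Perm (Fin 4)) :
      ∫ x, ballφ ((x ∘ a) ∘ τ) ((x ∘ b) ∘ σ) ∂Measure.pi ν = ballDiv A B := by
    refine integral_pi_ballφ (a := a ∘ τ) (b := b ∘ σ) ?_ (fun l => ha _) fun l => hb _
    rw [← Sum.elim_comp_map]
    exact hab.comp (Sum.map_injective.2 ⟨τ.injective, σ.injective⟩)
  have bounded (τ σ : Equiv.Perm (Fin 4)) :
      Integrable (fun x => ballφ ((x ∘ a) ∘ τ) ((x ∘ b) ∘ σ)) (Measure.pi ν) :=
    .of_bound (by fun_prop : Measurable _).aestronglyMeasurable 2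
      (.of_forall fun x => abs_ballφ_le _ _)
  simp only [ballφ']
  rw [integral_const_mul, integral_finsetSum _ fun τ _ => integrable_finsetSum _ fun σ _ =>
    bounded τ σ]
  simp only [integral_finsetSum _ fun σ _ => bounded _ σ, permuted, Finset.sum_const,
    Finset.card_univ, Fintype.card_perm, Fintype.card_fin, nsmul_eq_mul]
  rw [← mul_assoc, ← mul_assoc, Nat.cast_mul, mul_assoc _ _ (Nat.factorial 4 : ℝ),
    inv_mul_cancel₀ (by positivity), one_mul]

end BallDivergence

section KernelVersions

theorem exists_measurable_kernel {W : Type*} [MeasurableSpace W] {ν : Measure W} {f : W → ℝ}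
    (hf0 : ∀ u, 0 ≤ f u) {C : ℝ} (hfC : ∀ u, f u ≤ C) (hf1 : ∫ u, f u ∂ν = 1) :
    ∃ g : W → ℝ, Measurable g ∧ (∀ u, 0 ≤ g u) ∧ (∀ u, g u ≤ C) ∧ ∫ u, g u ∂ν = 1 ∧ g =ᵐ[ν] f := by
  have hfm : AEStronglyMeasurable f ν :=
    (Integrable.of_integral_ne_zero (by simp [hf1])).aestronglyMeasurable
  obtain ⟨u₀, -⟩ : ∃ u, f u ≠ 0 := by
    by_contra! h
    simp [h] at hf1
  have hC : 0 ≤ C := (hf0 u₀).trans (hfC u₀)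
  have hg : (fun u => max 0 (min (hfm.mk f u) C)) =ᵐ[ν] f := by
    filter_upwards [hfm.ae_eq_mk] with u hu
    rw [← hu, min_eq_left (hfC u), max_eq_right (hf0 u)]
  exact ⟨_, by have := hfm.stronglyMeasurable_mk.measurable; fun_prop, fun u => le_max_left _ _,
    fun u => max_le hC (min_le_right _ _), (integral_congr_ae hg).trans hf1, hg⟩

theorem integral_comp_sqrt_norm_sq_add (m n : ℕ) (K : ℝ → ℝ) :
    ∫ w : Euc m × Euc n, K (√(‖w.1‖ ^ 2 + ‖w.2‖ ^ 2)) = ∫ u : Euc (m + n), K ‖u‖ := by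
  have finrank_eq : Module.finrank ℝ (WithLp 2 (Euc m × Euc n)) = m + n := by
    rw [(WithLp.linearEquiv 2 ℝ (Euc m × Euc n)).finrank_eq]
    simp
  let e : WithLp 2 (Euc m × Euc n) ≃ₗᵢ[ℝ] Euc (m + n) :=
    ((stdOrthonormalBasis ℝ (WithLp 2 (Euc m × Euc n))).reindex (finCongr finrank_eq)).repr
  have isometry := e.measurePreserving.comp (WithLp.volume_preserving_toLp (Euc m) (Euc n))
  rw [← isometry.integral_comp (e.toHomeomorph.measurableEmbedding.comp
    (MeasurableEquiv.toLp 2 _).measurableEmbedding)]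
  simp [WithLp.prod_norm_eq_of_L2]

theorem quasiMeasurePreserving_smul_sub {E W : Type*} [MeasurableSpace E] {P : Measure E}
    [SFinite P] [NormedAddCommGroup W] [NormedSpace ℝ W] [FiniteDimensional ℝ W] [MeasureSpace W]
    [BorelSpace W] [(volume : Measure W).IsAddHaarMeasure] {F : E → W}
    (hF : Measure.QuasiMeasurePreserving F P) {c : ℝ} (hc : c ≠ 0) :
    Measure.QuasiMeasurePreserving (fun q : E × E => c • (F q.1 - F q.2)) (P.prod P) :=
  (Measure.quasiMeasurePreserving_smul volume hc).comp <|
    (quasiMeasurePreserving_sub volume volume).comp (QuasiMeasurePreserving.prodMap hF hF)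

theorem ae_forall_ne_of_ae_prod {Ω E : Type*} [MeasurableSpace Ω] [MeasurableSpace E]
    {μ : Measure Ω} [IsProbabilityMeasure μ] {P : Measure E} {V : ℕ → Ω → E}
    (hVm : ∀ i, Measurable (V i)) (hV : iIndepFun V μ) (hlaw : ∀ i, μ.map (V i) = P)
    {R : E → E → Prop} (hR : ∀ᵐ q ∂P.prod P, R q.1 q.2) :
    ∀ᵐ ω ∂μ, ∀ i j, i ≠ j → R (V i ω) (V j ω) := by
  simp only [ae_all_iff, eventually_imp_distrib_left]
  intro i j hij
  have pair_law := (indepFun_iff_map_prod_eq_prod_map_map (hVm i).aemeasurable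
    (hVm j).aemeasurable).1 (hV.indepFun hij)
  rw [hlaw, hlaw] at pair_law
  exact ae_of_ae_map ((hVm i).prodMk (hVm j)).aemeasurable (pair_law ▸ hR)

end KernelVersions

section TripleMarginal

variable {X Y Z : Type*} [MeasureSpace X] [MeasureSpace Y] [MeasureSpace Z]
  [SigmaFinite (volume : Measure X)] [SigmaFinite (volume : Measure Y)]
  [SigmaFinite (volume : Measure Z)]

theorem measurePreserving_insert_middle :
    MeasurePreserving (fun q : (X × Z) × Y => (q.1.1, q.2, q.1.2)) := by
  have assoc : MeasurePreserving (MeasurableEquiv.prodAssoc : (X × Z) × Y ≃ᵐ X × Z × Y) :=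
    ⟨MeasurableEquiv.prodAssoc.measurable, Measure.prodAssoc_prod⟩
  exact ((MeasurePreserving.id volume).prod Measure.measurePreserving_swap).comp assoc

theorem map_fst_snd_snd_withDensity_ofReal {f : X × Y × Z → ℝ} (hf : Measurable f)
    (hf0 : ∀ v, 0 ≤ f v) (hfi : Integrable f) :
    (volume.withDensity fun v => .ofReal (f v)).map (fun v => (v.1, v.2.2))
      = (volume.prod volume).withDensity fun q => .ofReal (∫ y, f (q.1, y, q.2)) := by
  have insert := measurePreserving_insert_middle (X := X) (Y := Y) (Z := Z)
  have pushed := map_withDensity_comp volume insert.measurable hf.ennreal_ofReal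
  rw [insert.map_eq] at pushed
  calc (volume.withDensity fun v => .ofReal (f v)).map (fun v => (v.1, v.2.2))
      = ((volume.withDensity fun q : (X × Z) × Y => .ofReal (f (q.1.1, q.2, q.1.2))).map
          fun q => (q.1.1, q.2, q.1.2)).map fun v => (v.1, v.2.2) := by
        rw [pushed]
    _ = (volume.withDensity fun q : (X × Z) × Y =>
          .ofReal (f (q.1.1, q.2, q.1.2))).map Prod.fst :=
        Measure.map_map (by fun_prop) insert.measurable
    _ = (volume.prod volume).withDensity fun q => .ofReal (∫ y, f (q.1, y, q.2)) :=
        map_fst_prod_withDensity_ofReal (μ := (volume : Measure (X × Z)))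
          (f := fun q => f (q.1.1, q.2, q.1.2))
          (hf.comp insert.measurable) (fun q => hf0 _) (insert.integrable_comp_of_integrable hfi)

end TripleMarginal

theorem ae_lintegral_ofReal_le_of_integral_le {X W : Type*} [MeasurableSpace X] [MeasurableSpace W]
    {μ : Measure X} {ν : Measure W} [SFinite μ] [SFinite ν] {f : X × W → ℝ}
    (hfi : Integrable f (μ.prod ν)) (hf0 : ∀ q, 0 ≤ f q) {C : ℝ≥0}
    (hfC : ∀ w, ∫ x, f (x, w) ∂μ ≤ C) :
    ∀ᵐ w ∂ν, ∫⁻ x, .ofReal (f (x, w)) ∂μ ≤ C := by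
  filter_upwards [hfi.prod_left_ae] with w hw
  rw [← ofReal_integral_eq_lintegral_ofReal hw (.of_forall fun _ => hf0 _)]
  exact (ENNReal.ofReal_le_ofReal (hfC w)).trans_eq (ENNReal.ofReal_coe_nnreal)

instance instIsAddHaarMeasureVolumeProd {V W : Type*} [AddGroup V] [TopologicalSpace V]
    [IsTopologicalAddGroup V] [MeasureSpace V] [BorelSpace V] [SecondCountableTopology V]
    [AddGroup W] [TopologicalSpace W] [IsTopologicalAddGroup W] [MeasureSpace W] [BorelSpace W]
    [(volume : Measure V).IsAddHaarMeasure] [(volume : Measure W).IsAddHaarMeasure]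
    [SFinite (volume : Measure V)] [SFinite (volume : Measure W)] :
    (volume : Measure (V × W)).IsAddHaarMeasure :=
  inferInstanceAs ((volume : Measure V).prod (volume : Measure W)).IsAddHaarMeasure

/-! ### The order-9 statistic -/

section Statistic

variable {dX dY dZ : ℕ}

/-- The factor of `φ_n` attached to each of the eight points compared with the first one: the
`(Y, Z)`-kernel for the first four, the `Z`-kernel for the last four. The kernels are functions on
the data space, so that they may be replaced by measurable versions of `K ‖·‖`. -/
def localWeight (g₁ : Euc dY × Euc dZ → ℝ) (g₂ : Euc dZ → ℝ) (h₁ h₂ : ℝ) :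
    Fin (4 + 4) → (v v' : Euc dX × Euc dY × Euc dZ) → ℝ :=
  Fin.append (fun _ v v' => scaledKernel g₁ h₁ (v.2 - v'.2))
    fun _ v v' => scaledKernel g₂ h₂ (v.2.2 - v'.2.2)

/-- The density that the weighted law of `X` concentrates on at `w = (y, z)`: `p(·, y, z)` for the
first four points, `p_{X,Z}(·, z)` for the last four. -/
def limitDensity (p : Euc dX → Euc dY → Euc dZ → ℝ) :
    Fin (4 + 4) → Euc dY × Euc dZ → Euc dX → ℝ :=
  Fin.append (fun _ w x => p x w.1 w.2) fun _ w x => ∫ y, p x y w.2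

/-- `φ'` as a function of the concatenation of its two blocks of four arguments. -/
def ballφAppend {d : ℕ} (x : Fin (4 + 4) → Euc d) : ℝ :=
  ballφ' (x ∘ Fin.castAdd 4) (x ∘ Fin.natAdd 4)

theorem measurable_ballφAppend {d : ℕ} : Measurable (ballφAppend (d := d)) := by
  unfold ballφAppend Function.comp
  fun_prop

theorem enorm_ballφAppend_le {d : ℕ} (x : Fin (4 + 4) → Euc d) :
    ‖ballφAppend x‖ₑ ≤ (2 : ℝ≥0) :=
  ENNReal.coe_le_coe.2 <| NNReal.coe_le_coe.1 <| abs_ballφ'_le _ _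

theorem ustatCore_eq_prod_localWeight (K : ℝ → ℝ) {h₁ h₂ : ℝ} (hh₁ : 0 < h₁) (hh₂ : 0 < h₂)
    (v : Fin (4 + 4 + 1) → Euc dX × Euc dY × Euc dZ) :
    ustatCore K h₁ h₂ v
      = (∏ l, localWeight (fun w => K √(‖w.1‖ ^ 2 + ‖w.2‖ ^ 2)) (fun u => K ‖u‖) h₁ h₂ l (v 0)
          (Fin.tail v l)) * ballφAppend (Prod.fst ∘ Fin.tail v) := by
  have wYZ_eq (v v' : Euc dX × Euc dY × Euc dZ) : wYZ K h₁ v.2.1 v'.2.1 v.2.2 v'.2.2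
      = K √(‖(h₁⁻¹ • (v.2 - v'.2)).1‖ ^ 2 + ‖(h₁⁻¹ • (v.2 - v'.2)).2‖ ^ 2) := by
    simp only [wYZ, Prod.smul_fst, Prod.smul_snd, Prod.fst_sub, Prod.snd_sub, norm_smul,
      ← dist_eq_norm, norm_inv, Real.norm_of_nonneg hh₁.le]
    rw [mul_pow, mul_pow, ← mul_add, Real.sqrt_mul (by positivity), Real.sqrt_sq (by positivity),
      div_eq_inv_mul]
  have kernelZ_eq (z z' : Euc dZ) : K (dist z z' / h₂) = K ‖h₂⁻¹ • (z - z')‖ := by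
    rw [norm_smul, ← dist_eq_norm, norm_inv, Real.norm_of_nonneg hh₂.le, div_eq_inv_mul]
  have pow_eq (h : ℝ) (d : ℕ) : ((h ^ d)⁻¹) ^ 4 = (h ^ (4 * d))⁻¹ := by
    rw [inv_pow, ← pow_mul, mul_comm]
  have tail_castAdd (l : Fin 4) : Fin.tail v (Fin.castAdd 4 l) = v ⟨l.val + 1, by omega⟩ := rfl
  have tail_natAdd (l : Fin 4) : Fin.tail v (Fin.natAdd 4 l) = v ⟨l.val + 5, by omega⟩ :=
    congrArg v (Fin.ext (by simp))
  simp only [ustatCore, wYZ_eq, kernelZ_eq, Fin.prod_univ_add, localWeight, Fin.append_left,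
    Fin.append_right, scaledKernel, Finset.prod_mul_distrib, Finset.prod_const, Finset.card_univ,
    Fintype.card_fin, Module.finrank_prod, finrank_euclideanSpace,
    pow_eq, ballφAppend, Function.comp_def, tail_castAdd, tail_natAdd]
  ring

theorem ustat_eq_uStatistic {Ω : Type} (K : ℝ → ℝ) (h₁ h₂ : ℝ) (n : ℕ) (Xs : ℕ → Ω → Euc dX)
    (Ys : ℕ → Ω → Euc dY) (Zs : ℕ → Ω → Euc dZ) (ω : Ω) :
    ustat K h₁ h₂ n Xs Ys Zs ω
      = uStatistic (ustatCore K h₁ h₂) fun i : Fin n => (Xs i ω, Ys i ω, Zs i ω) := by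
  rw [uStatistic_eq, Fintype.card_embedding_eq, Fintype.card_fin, Fintype.card_fin, ustat,
    ← Finset.sum_subtype_eq_sum_filter, Finset.subtype_univ]
  exact congrArg _ <| Equiv.sum_comp (Equiv.subtypeInjectiveEquivEmbedding (Fin 9) (Fin n))
    fun i : Fin 9 ↪ Fin n => ustatCore K h₁ h₂ fun k => (Xs (i k) ω, Ys (i k) ω, Zs (i k) ω)

/-- The core function of the U-statistic with localizing kernels `g₁` and `g₂`. -/
def localCore (g₁ : Euc dY × Euc dZ → ℝ) (g₂ : Euc dZ → ℝ) (h₁ h₂ : ℝ)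
    (v : Fin (4 + 4 + 1) → Euc dX × Euc dY × Euc dZ) : ℝ :=
  (∏ l, localWeight g₁ g₂ h₁ h₂ l (v 0) (Fin.tail v l)) * ballφAppend (Prod.fst ∘ Fin.tail v)

variable {P : Measure (Euc dX × Euc dY × Euc dZ)} {g₁ g₁' : Euc dY × Euc dZ → ℝ}
  {g₂ g₂' : Euc dZ → ℝ} {h₁ h₂ : ℝ}

theorem ae_localWeight_congr [SFinite P] (hP : P ≪ volume) (hg₁ : g₁ =ᵐ[volume] g₁')
    (hg₂ : g₂ =ᵐ[volume] g₂') (hh₁ : h₁ ≠ 0) (hh₂ : h₂ ≠ 0) (l : Fin (4 + 4)) :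
    ∀ᵐ q ∂P.prod P, localWeight g₁ g₂ h₁ h₂ l q.1 q.2 = localWeight g₁' g₂' h₁ h₂ l q.1 q.2 := by
  have proj_yz : Measure.QuasiMeasurePreserving (fun v : Euc dX × Euc dY × Euc dZ => v.2) P :=
    Measure.quasiMeasurePreserving_snd.mono_left hP
  have proj_z : Measure.QuasiMeasurePreserving (fun v : Euc dX × Euc dY × Euc dZ => v.2.2) P :=
    Measure.quasiMeasurePreserving_snd.comp proj_yz
  refine Fin.addCases (fun l => ?_) (fun l => ?_) l
  · filter_upwards [(quasiMeasurePreserving_smul_sub proj_yz (inv_ne_zero hh₁)).ae_eq_comp hg₁]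
      with q hq
    simp only [localWeight, Fin.append_left, scaledKernel]
    exact congrArg _ hq
  · filter_upwards [(quasiMeasurePreserving_smul_sub proj_z (inv_ne_zero hh₂)).ae_eq_comp hg₂]
      with q hq
    simp only [localWeight, Fin.append_right, scaledKernel]
    exact congrArg _ hq

theorem ae_uStatistic_localCore_congr {Ω : Type*} [MeasurableSpace Ω] {μ : Measure Ω}
    [IsProbabilityMeasure μ] [SFinite P] {V : ℕ → Ω → Euc dX × Euc dY × Euc dZ}
    (hVm : ∀ i, Measurable (V i)) (hV : iIndepFun V μ) (hlaw : ∀ i, μ.map (V i) = P)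
    (hP : P ≪ volume) (hg₁ : g₁ =ᵐ[volume] g₁') (hg₂ : g₂ =ᵐ[volume] g₂') (hh₁ : h₁ ≠ 0)
    (hh₂ : h₂ ≠ 0) (n : ℕ) :
    ∀ᵐ ω ∂μ, uStatistic (localCore g₁ g₂ h₁ h₂) (fun i : Fin n => V i ω)
      = uStatistic (localCore g₁' g₂' h₁ h₂) fun i : Fin n => V i ω := by
  have weights_eq : ∀ᵐ ω ∂μ, ∀ l i j, i ≠ j →
      localWeight g₁ g₂ h₁ h₂ l (V i ω) (V j ω) = localWeight g₁' g₂' h₁ h₂ l (V i ω) (V j ω) :=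
    ae_all_iff.2 fun l => ae_forall_ne_of_ae_prod hVm hV hlaw
      (R := fun v v' => localWeight g₁ g₂ h₁ h₂ l v v' = localWeight g₁' g₂' h₁ h₂ l v v')
      (ae_localWeight_congr hP hg₁ hg₂ hh₁ hh₂ l)
  filter_upwards [weights_eq] with ω hω
  refine Finset.expect_congr rfl fun i _ => congrArg (· * _) <| Finset.prod_congr rfl fun l _ => ?_
  exact hω l _ _ fun h => (Fin.succ_ne_zero l).symm (i.injective (Fin.ext h))

variable {p : Euc dX → Euc dY → Euc dZ → ℝ}

theorem measurable_integral_middle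
    (hp : Measurable fun v : Euc dX × Euc dY × Euc dZ => p v.1 v.2.1 v.2.2) :
    Measurable fun q : Euc dX × Euc dZ => ∫ y, p q.1 y q.2 :=
  (hp.comp (f := fun r : (Euc dX × Euc dZ) × Euc dY => (r.1.1, r.2, r.1.2))
    (by fun_prop)).stronglyMeasurable.integral_prod_right'.measurable

variable (hp : Measurable fun v : Euc dX × Euc dY × Euc dZ => p v.1 v.2.1 v.2.2)
  (hp0 : ∀ x y z, 0 ≤ p x y z)
  (hP : P = volume.withDensity fun v => ENNReal.ofReal (p v.1 v.2.1 v.2.2))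

include hp hp0 hP

theorem integrable_density [IsFiniteMeasure P] :
    Integrable fun v : Euc dX × Euc dY × Euc dZ => p v.1 v.2.1 v.2.2 :=
  integrable_of_map_eq_withDensity (P := P) measurable_id hp (fun _ => hp0 _ _ _)
    (Measure.map_id.trans hP)

theorem map_fst_snd_snd_eq_withDensity [IsFiniteMeasure P] :
    P.map (fun v => (v.1, v.2.2))
      = (volume.prod volume).withDensity fun q => .ofReal (∫ y, p q.1 y q.2) := by
  have hpi := integrable_density hp hp0 hP
  rw [hP]
  exact map_fst_snd_snd_withDensity_ofReal hp (fun _ => hp0 _ _ _) hpi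

theorem integrable_integral_middle [IsFiniteMeasure P] :
    Integrable (fun q : Euc dX × Euc dZ => ∫ y, p q.1 y q.2) (volume.prod volume) :=
  integrable_of_map_eq_withDensity (T := fun v : Euc dX × Euc dY × Euc dZ => (v.1, v.2.2))
    (by fun_prop) (measurable_integral_middle hp) (fun q => integral_nonneg fun _ => hp0 _ _ _)
    (map_fst_snd_snd_eq_withDensity hp hp0 hP)

theorem isLocalizing_localWeight [IsFiniteMeasure P] {C : ℝ≥0} (hYZ : ∀ y z, ∫ x, p x y z ≤ C)
    (hZ : ∀ z, ∫ x, ∫ y, p x y z ≤ C) {M : ℝ}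
    (hg₁ : Measurable g₁) (hg₁0 : ∀ u, 0 ≤ g₁ u) (hg₁M : ∀ u, g₁ u ≤ M) (hg₁1 : ∫ u, g₁ u = 1)
    (hg₂ : Measurable g₂) (hg₂0 : ∀ u, 0 ≤ g₂ u) (hg₂M : ∀ u, g₂ u ≤ M) (hg₂1 : ∫ u, g₂ u = 1)
    {h₁ h₂ : ℕ → ℝ} (hh₁0 : ∀ n, 0 < h₁ n) (hh₁ : Tendsto h₁ atTop (𝓝 0))
    (hh₂0 : ∀ n, 0 < h₂ n) (hh₂ : Tendsto h₂ atTop (𝓝 0)) (l : Fin (4 + 4)) :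
    IsLocalizing P volume Prod.fst C
      (Fin.append (fun _ : Fin 4 => fun n => ((h₁ n ^ (dY + dZ))⁻¹ * M).toNNReal)
        (fun _ : Fin 4 => fun n => ((h₂ n ^ dZ)⁻¹ * M).toNNReal) l)
      (fun n => localWeight g₁ g₂ (h₁ n) (h₂ n) l) (fun v => limitDensity p l v.2) := by
  refine Fin.addCases (fun l => ?_) (fun l => ?_) l
  · have := isLocalizing_scaledKernel (T := id) measurable_id hp (fun _ => hp0 _ _ _)
      (Measure.map_id.trans hP) (ae_lintegral_ofReal_le_of_integral_le
        (integrable_density hp hp0 hP) (fun _ => hp0 _ _ _) fun w => hYZ w.1 w.2)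
      hg₁ hg₁0 hg₁M hg₁1 hh₁0 hh₁
    simp only [localWeight, limitDensity, Fin.append_left]
    simpa using this
  · have hpXZ0 (q : Euc dX × Euc dZ) : 0 ≤ ∫ y, p q.1 y q.2 := integral_nonneg fun _ => hp0 _ _ _
    have := isLocalizing_scaledKernel (T := fun v : Euc dX × Euc dY × Euc dZ => (v.1, v.2.2))
      (by fun_prop) (measurable_integral_middle hp) hpXZ0
      (map_fst_snd_snd_eq_withDensity hp hp0 hP) (ae_lintegral_ofReal_le_of_integral_le
        (integrable_integral_middle hp hp0 hP) hpXZ0 hZ) hg₂ hg₂0 hg₂M hg₂1 hh₂0 hh₂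
    simp only [localWeight, limitDensity, Fin.append_right]
    simpa using this

end Statistic

section NormalizedDensities

variable {X : Type*} [MeasurableSpace X] {ν : Measure X}

theorem isProbabilityMeasure_withDensity_ofReal_div_integral {a : X → ℝ} (ha0 : ∀ x, 0 ≤ a x)
    (hai : Integrable a ν) (h : ∫ x, a x ∂ν ≠ 0) :
    IsProbabilityMeasure (ν.withDensity fun x => .ofReal (a x / ∫ x, a x ∂ν)) := by
  constructor
  rw [withDensity_apply _ .univ, setLIntegral_univ,
    ← ofReal_integral_eq_lintegral_ofReal (hai.div_const _)
      (.of_forall fun x => div_nonneg (ha0 x) (integral_nonneg ha0)), integral_div, div_self h,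
    ENNReal.ofReal_one]

theorem integral_pi_prod_mul_eq [SigmaFinite ν] {ι : Type*} [Fintype ι] {a : ι → X → ℝ}
    (ha : ∀ i, Measurable (a i)) (ha0 : ∀ i x, 0 ≤ a i x) (hai : ∀ i, Integrable (a i) ν)
    (ψ : (ι → X) → ℝ) :
    ∫ x, (∏ i, a i (x i)) * ψ x ∂Measure.pi (fun _ => ν)
      = (∏ i, ∫ x, a i x ∂ν) * ∫ x, ψ x
          ∂Measure.pi fun i => ν.withDensity fun x => .ofReal (a i x / ∫ x, a i x ∂ν) := by
  by_cases mass : ∃ i, ∫ x, a i x ∂ν = 0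
  · obtain ⟨i, hi⟩ := mass
    have ai_zero : a i =ᵐ[ν] 0 := (integral_eq_zero_iff_of_nonneg (ha0 i) (hai i)).1 hi
    rw [Finset.prod_eq_zero (Finset.mem_univ i) hi, zero_mul]
    refine integral_eq_zero_of_ae ?_
    filter_upwards [(Measure.quasiMeasurePreserving_eval (fun _ => ν) i).ae_eq_comp ai_zero]
      with x hx
    rw [Finset.prod_eq_zero (Finset.mem_univ i) hx, zero_mul, Pi.zero_apply]
  · push Not at mass
    rw [integral_pi_withDensity_ofReal (fun _ => ν) (fun i => (ha i).div_const _)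
      (fun i x => div_nonneg (ha0 i x) (integral_nonneg (ha0 i))), ← integral_const_mul]
    refine integral_congr_ae (.of_forall fun x => ?_)
    simp only [Finset.prod_div_distrib]
    rw [← mul_assoc, mul_div_cancel₀ _ (Finset.prod_ne_zero_iff.2 fun i _ => mass i)]

end NormalizedDensities

section Target

variable {dX dY dZ : ℕ} {p : Euc dX → Euc dY → Euc dZ → ℝ}

theorem limitDensity_castAdd (l : Fin 4) (w : Euc dY × Euc dZ) :
    limitDensity p (Fin.castAdd 4 l) w = fun x => p x w.1 w.2 := by
  simp only [limitDensity, Fin.append_left]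

theorem limitDensity_natAdd (l : Fin 4) (w : Euc dY × Euc dZ) :
    limitDensity p (Fin.natAdd 4 l) w = fun x => ∫ y, p x y w.2 := by
  simp only [limitDensity, Fin.append_right]

theorem measurable_limitDensity
    (hp : Measurable fun v : Euc dX × Euc dY × Euc dZ => p v.1 v.2.1 v.2.2) (l : Fin (4 + 4)) :
    Measurable (Function.uncurry (limitDensity p l)) := by
  refine Fin.addCases (fun l => ?_) (fun l => ?_) l
  · simp only [Function.uncurry_def, limitDensity_castAdd]
    exact hp.comp (f := fun q : (Euc dY × Euc dZ) × Euc dX => (q.2, q.1)) (by fun_prop)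
  · simp only [Function.uncurry_def, limitDensity_natAdd]
    exact (measurable_integral_middle hp).comp
      (f := fun q : (Euc dY × Euc dZ) × Euc dX => (q.2, q.1.2)) (by fun_prop)

theorem limitDensity_nonneg (hp0 : ∀ x y z, 0 ≤ p x y z) (l : Fin (4 + 4)) (w : Euc dY × Euc dZ)
    (x : Euc dX) : 0 ≤ limitDensity p l w x := by
  refine Fin.addCases (fun l => ?_) (fun l => ?_) l
  · rw [limitDensity_castAdd]
    exact hp0 _ _ _
  · rw [limitDensity_natAdd]
    exact integral_nonneg fun _ => hp0 _ _ _

theorem integral_limitDensity_mul_ballφAppend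
    (hp : Measurable fun v : Euc dX × Euc dY × Euc dZ => p v.1 v.2.1 v.2.2)
    (hp0 : ∀ x y z, 0 ≤ p x y z) {y : Euc dY} {z : Euc dZ}
    (hYZ : Integrable fun x => p x y z) (hZ : Integrable fun x => ∫ y, p x y z) :
    ∫ x, (∏ l, limitDensity p l (y, z) (x l)) * ballφAppend x ∂Measure.pi (fun _ => volume)
      = ballDiv (condAtYZ p y z) (condAtZ p z) * (margYZ p y z ^ 4 * margZ p z ^ 4) := by
  have integrable (l) : Integrable (limitDensity p l (y, z)) := by
    refine Fin.addCases (fun l => ?_) (fun l => ?_) l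
    · rwa [limitDensity_castAdd]
    · rwa [limitDensity_natAdd]
  have mass_prod : ∏ l, ∫ x, limitDensity p l (y, z) x = margYZ p y z ^ 4 * margZ p z ^ 4 := by
    rw [Fin.prod_univ_add]
    simp only [limitDensity_castAdd, limitDensity_natAdd, Finset.prod_const, Finset.card_univ,
      Fintype.card_fin, margYZ, margZ]
  rw [integral_pi_prod_mul_eq (fun l => (measurable_limitDensity hp l).of_uncurry_left)
    (limitDensity_nonneg hp0 · _) integrable, mass_prod, mul_comm]
  by_cases mass : ∃ l, ∫ x, limitDensity p l (y, z) x = 0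
  · obtain ⟨l, hl⟩ := mass
    rw [← mass_prod, Finset.prod_eq_zero (Finset.mem_univ l) hl, mul_zero, mul_zero]
  · push Not at mass
    let ρ l := (volume : Measure (Euc dX)).withDensity fun x =>
      .ofReal (limitDensity p l (y, z) x / ∫ x, limitDensity p l (y, z) x)
    have prob (l) : IsProbabilityMeasure (ρ l) :=
      isProbabilityMeasure_withDensity_ofReal_div_integral (limitDensity_nonneg hp0 l (y, z))
        (integrable l) (mass l)
    have condYZ (l : Fin 4) : ρ (Fin.castAdd 4 l) = condAtYZ p y z := by
      simp only [ρ, limitDensity_castAdd]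
      rfl
    have condZ (l : Fin 4) : ρ (Fin.natAdd 4 l) = condAtZ p z := by
      simp only [ρ, limitDensity_natAdd]
      rfl
    have : IsProbabilityMeasure (condAtYZ p y z) := condYZ 0 ▸ prob _
    have : IsProbabilityMeasure (condAtZ p z) := condZ 0 ▸ prob _
    exact congrArg (· * _) <| integral_pi_ballφ' (ν := ρ) finSumFinEquiv.injective condYZ condZ

variable {P : Measure (Euc dX × Euc dY × Euc dZ)} [IsFiniteMeasure P]
  (hp : Measurable fun v : Euc dX × Euc dY × Euc dZ => p v.1 v.2.1 v.2.2)
  (hp0 : ∀ x y z, 0 ≤ p x y z)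
  (hP : P = volume.withDensity fun v => ENNReal.ofReal (p v.1 v.2.1 v.2.2))

include hp hp0 hP

theorem integral_comp_snd_eq_integral_mul_margYZ
    {θ : Euc dY × Euc dZ → ℝ} (hθ : Measurable θ) (hθP : Integrable (fun v => θ v.2) P) :
    ∫ v, θ v.2 ∂P = ∫ y, ∫ z, θ (y, z) * margYZ p y z := by
  let m (w : Euc dY × Euc dZ) : ℝ := margYZ p w.1 w.2
  have hm : Measurable m := hp.stronglyMeasurable.integral_prod_left'.measurable
  have hm0 (w) : 0 ≤ m w := integral_nonneg fun _ => hp0 _ _ _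
  have law_yz : P.map Prod.snd = volume.withDensity fun w => .ofReal (m w) := by
    have hpi := integrable_density hp hp0 hP
    rw [hP]
    exact map_snd_prod_withDensity_ofReal hp (fun _ => hp0 _ _ _) hpi
  have smul_eq : (fun w => (ENNReal.ofReal (m w)).toReal • θ w) = fun w => θ w * m w := by
    funext w
    rw [ENNReal.toReal_ofReal (hm0 w), smul_eq_mul, mul_comm]
  have θm_integrable : Integrable fun w => θ w * m w := by
    rw [← smul_eq, ← integrable_withDensity_iff_integrable_smul' hm.ennreal_ofReal
      (.of_forall fun _ => ENNReal.ofReal_lt_top), ← law_yz]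
    exact (integrable_map_measure hθ.aestronglyMeasurable measurable_snd.aemeasurable).2 hθP
  rw [← integral_map measurable_snd.aemeasurable hθ.aestronglyMeasurable, law_yz,
    integral_withDensity_eq_integral_toReal_smul hm.ennreal_ofReal
      (.of_forall fun _ => ENNReal.ofReal_lt_top), smul_eq]
  exact integral_prod _ θm_integrable

theorem integral_limit_eq_conditionalBallDiv
    (hθ : Integrable (fun v : Euc dX × Euc dY × Euc dZ =>
      ∫ x, (∏ l, limitDensity p l v.2 (x l)) * ballφAppend x ∂Measure.pi fun _ => volume) P) :
    ∫ v, (∫ x, (∏ l, limitDensity p l v.2 (x l)) * ballφAppend x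
        ∂Measure.pi fun _ => volume) ∂P
      = ∫ y, ∫ z, ballDiv (condAtYZ p y z) (condAtZ p z)
          * (margYZ p y z ^ 4 * margZ p z ^ 4) * margYZ p y z := by
  have yz_slices : ∀ᵐ w : Euc dY × Euc dZ, Integrable fun x => p x w.1 w.2 :=
    (integrable_density hp hp0 hP).prod_left_ae
  have z_slices : ∀ᵐ z : Euc dZ, Integrable fun x => ∫ y, p x y z :=
    (integrable_integral_middle hp hp0 hP).prod_left_ae
  rw [integral_comp_snd_eq_integral_mul_margYZ hp hp0 hP
    (measurable_integral_prod_mul (measurable_limitDensity hp) measurable_ballφAppend) hθ]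
  refine integral_congr_ae ?_
  filter_upwards [Measure.ae_ae_of_ae_prod yz_slices] with y hy
  refine integral_congr_ae ?_
  filter_upwards [hy, z_slices] with z hyz hz
  rw [integral_limitDensity_mul_ballφAppend hp hp0 hyz hz]

end Target

section Bandwidth

variable {h : ℕ → ℝ} {d : ℕ}

theorem tendsto_nhds_zero_of_bandwidth (h0 : ∀ n, 0 < h n)
    (hd : Tendsto (fun n : ℕ => (n : ℝ) * h n ^ d) atTop atTop)
    (hd4 : Tendsto (fun n : ℕ => (n : ℝ) * h n ^ (d + 4)) atTop (𝓝 0)) :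
    Tendsto h atTop (𝓝 0) := by
  have pow_four : Tendsto (fun n => h n ^ 4) atTop (𝓝 0) := by
    refine (hd4.div_atTop hd).congr' ?_
    filter_upwards [eventually_ne_atTop 0] with n hn
    have := h0 n
    rw [pow_add, mul_div_mul_left _ _ (by positivity), mul_div_cancel_left₀ _ (by positivity)]
  simpa only [Real.pow_rpow_inv_natCast (h0 _).le four_ne_zero,
    Real.zero_rpow (by norm_num : ((4 : ℕ) : ℝ)⁻¹ ≠ 0)] using
    pow_four.rpow_const (p := ((4 : ℕ) : ℝ)⁻¹) (.inr (by positivity))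

theorem tendsto_toNNReal_inv_pow_mul_div_natCast
    (hd : Tendsto (fun n : ℕ => (n : ℝ) * h n ^ d) atTop atTop) (M : ℝ) :
    Tendsto (fun n : ℕ => ((h n ^ d)⁻¹ * M).toNNReal / n) atTop (𝓝 0) := by
  have ratio : Tendsto (fun n : ℕ => (h n ^ d)⁻¹ * M / n) atTop (𝓝 0) := by
    simpa only [Pi.inv_apply, mul_inv_rev, zero_mul, ← div_eq_mul_inv, div_mul_eq_mul_div]
      using hd.inv_tendsto_atTop.mul_const M
  simpa only [Real.toNNReal_div' (Nat.cast_nonneg _), Real.toNNReal_natCast, Real.toNNReal_zero]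
    using tendsto_real_toNNReal ratio

end Bandwidth

section Consistency

variable {dX dY dZ : ℕ} {Ω : Type} [MeasurableSpace Ω] {μ : Measure Ω} [IsProbabilityMeasure μ]
  {P : Measure (Euc dX × Euc dY × Euc dZ)} {p : Euc dX → Euc dY → Euc dZ → ℝ}
  {h₁ h₂ : ℕ → ℝ}

theorem tendstoInMeasure_uStatistic_localCore
    {V : ℕ → Ω → Euc dX × Euc dY × Euc dZ} (hVm : ∀ i, Measurable (V i)) (hV : iIndepFun V μ)
    (hp : Measurable fun v : Euc dX × Euc dY × Euc dZ => p v.1 v.2.1 v.2.2)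
    (hp0 : ∀ x y z, 0 ≤ p x y z)
    (hlaw : ∀ i, μ.map (V i) = P)
    (hP : P = volume.withDensity fun v => ENNReal.ofReal (p v.1 v.2.1 v.2.2))
    {C : ℝ≥0} (hYZ : ∀ y z, ∫ x, p x y z ≤ C) (hZ : ∀ z, ∫ x, ∫ y, p x y z ≤ C)
    {g₁ : Euc dY × Euc dZ → ℝ} {g₂ : Euc dZ → ℝ} {M : ℝ}
    (hg₁ : Measurable g₁) (hg₁0 : ∀ u, 0 ≤ g₁ u) (hg₁M : ∀ u, g₁ u ≤ M) (hg₁1 : ∫ u, g₁ u = 1)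
    (hg₂ : Measurable g₂) (hg₂0 : ∀ u, 0 ≤ g₂ u) (hg₂M : ∀ u, g₂ u ≤ M) (hg₂1 : ∫ u, g₂ u = 1)
    (hh₁0 : ∀ n, 0 < h₁ n) (hh₂0 : ∀ n, 0 < h₂ n) (hh₁ : Tendsto h₁ atTop (𝓝 0))
    (hh₂ : Tendsto h₂ atTop (𝓝 0))
    (hnh₁ : Tendsto (fun n : ℕ => (n : ℝ) * h₁ n ^ (dY + dZ)) atTop atTop)
    (hnh₂ : Tendsto (fun n : ℕ => (n : ℝ) * h₂ n ^ dZ) atTop atTop) :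
    TendstoInMeasure μ
      (fun n ω => uStatistic (localCore g₁ g₂ (h₁ n) (h₂ n)) fun i : Fin n => V i ω) atTop
      fun _ => ∫ y, ∫ z, ballDiv (condAtYZ p y z) (condAtZ p z)
        * (margYZ p y z ^ 4 * margZ p z ^ 4) * margYZ p y z := by
  have : IsProbabilityMeasure P :=
    hlaw 0 ▸ Measure.isProbabilityMeasure_map (hVm 0).aemeasurable
  have localizing := isLocalizing_localWeight hp hp0 hP hYZ hZ hg₁ hg₁0 hg₁M hg₁1
    hg₂ hg₂0 hg₂M hg₂1 hh₁0 hh₁ hh₂0 hh₂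
  rw [← integral_limit_eq_conditionalBallDiv hp hp0 hP
    (IsLocalizing.integrable_limit localizing measurable_ballφAppend enorm_ballφAppend_le)]
  refine tendstoInMeasure_localized_uStatistic hVm hV hlaw localizing measurable_fst (fun l => ?_)
    measurable_ballφAppend enorm_ballφAppend_le
  refine Fin.addCases (fun l => ?_) (fun l => ?_) l
  · simp only [Fin.append_left]
    exact tendsto_toNNReal_inv_pow_mul_div_natCast hnh₁ M
  · simp only [Fin.append_right]
    exact tendsto_toNNReal_inv_pow_mul_div_natCast hnh₂ M

end Consistency

theorem ustat_consistent_general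
    {dX dY dZ : ℕ} {Ω : Type} [MeasurableSpace Ω]
    (μ : Measure Ω) [IsProbabilityMeasure μ]
    (Xs : ℕ → Ω → Euc dX) (Ys : ℕ → Ω → Euc dY) (Zs : ℕ → Ω → Euc dZ)
    (hmeas : ∀ i, Measurable fun ω => (Xs i ω, Ys i ω, Zs i ω))
    (p : Euc dX → Euc dY → Euc dZ → ℝ)
    (hp_meas : Measurable fun v : Euc dX × Euc dY × Euc dZ => p v.1 v.2.1 v.2.2)
    (hp_nonneg : ∀ x y z, 0 ≤ p x y z)
    (hiid : iIndepFun (fun i ω => (Xs i ω, Ys i ω, Zs i ω)) μ)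
    (hlaw : ∀ i, μ.map (fun ω => (Xs i ω, Ys i ω, Zs i ω))
      = volume.withDensity fun v => ENNReal.ofReal (p v.1 v.2.1 v.2.2))
    {C : ℝ} (hYZ : ∀ y z, margYZ p y z ≤ C) (hZ : ∀ z, margZ p z ≤ C)
    (K : ℝ → ℝ) (hK0 : ∀ t, 0 ≤ K t) {M : ℝ} (hKM : ∀ t, K t ≤ M)
    (hK1 : ∫ u : Euc (dY + dZ), K ‖u‖ = 1) (hK2 : ∫ u : Euc dZ, K ‖u‖ = 1)
    (h1 h2 : ℕ → ℝ) (h1_pos : ∀ n, 0 < h1 n) (h2_pos : ∀ n, 0 < h2 n)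
    (h1_lim : Tendsto h1 atTop (𝓝 0)) (h2_lim : Tendsto h2 atTop (𝓝 0))
    (nh1_lim : Tendsto (fun n : ℕ => (n : ℝ) * h1 n ^ (dY + dZ)) atTop atTop)
    (nh2_lim : Tendsto (fun n : ℕ => (n : ℝ) * h2 n ^ dZ) atTop atTop) :
    TendstoInMeasure μ
      (fun n ω => ustat K (h1 n) (h2 n) n Xs Ys Zs ω)
      atTop
      (fun _ => ∫ y, ∫ z, ballDiv (condAtYZ p y z) (condAtZ p z)
        * (margYZ p y z ^ 4 * margZ p z ^ 4) * margYZ p y z) := by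
  -- `K` need not be Borel, so the radial kernels are replaced by measurable versions.
  obtain ⟨g₁, hg₁, hg₁0, hg₁M, hg₁1, hg₁K⟩ := exists_measurable_kernel
    (fun w : Euc dY × Euc dZ => hK0 √(‖w.1‖ ^ 2 + ‖w.2‖ ^ 2)) (fun _ => hKM _)
    ((integral_comp_sqrt_norm_sq_add dY dZ K).trans hK1)
  obtain ⟨g₂, hg₂, hg₂0, hg₂M, hg₂1, hg₂K⟩ := exists_measurable_kernel
    (fun u : Euc dZ => hK0 ‖u‖) (fun _ => hKM _) hK2
  refine (tendstoInMeasure_uStatistic_localCore hmeas hiid hp_meas hp_nonneg hlaw rfl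
    (fun y z => (hYZ y z).trans C.le_coe_toNNReal) (fun z => (hZ z).trans C.le_coe_toNNReal)
    hg₁ hg₁0 hg₁M hg₁1 hg₂ hg₂0 hg₂M hg₂1 h1_pos h2_pos h1_lim h2_lim nh1_lim nh2_lim).congr_left
    fun n => ?_
  have core_eq := funext (ustatCore_eq_prod_localWeight (dX := dX) (dY := dY) (dZ := dZ) K
    (h1_pos n) (h2_pos n))
  filter_upwards [ae_uStatistic_localCore_congr hmeas hiid hlaw
    (withDensity_absolutelyContinuous _ _) hg₁K hg₂K (h1_pos n).ne' (h2_pos n).ne' n] with ω hω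
  rw [hω, ustat_eq_uStatistic, core_eq]
  rfl

/-- **Theorem 3(2).** Under (A1)-(A3), the order-9 U-statistic `ζ̂*_n` converges in
probability to `ζ*(X, Y | Z) = E[Θ²(P_{X|Y,Z}, P_{X|Z}) p_{Y,Z}(Y,Z)⁴ p_Z(Z)⁴]`. -/
theorem ustat_consistent
    {dX dY dZ : ℕ} {Ω : Type} [MeasurableSpace Ω]
    (μ : Measure Ω) [IsProbabilityMeasure μ]
    (Xs : ℕ → Ω → Euc dX) (Ys : ℕ → Ω → Euc dY) (Zs : ℕ → Ω → Euc dZ)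
    (hmeas : ∀ i, Measurable fun ω => (Xs i ω, Ys i ω, Zs i ω))
    (p : Euc dX → Euc dY → Euc dZ → ℝ)
    (hp_meas : Measurable fun v : Euc dX × Euc dY × Euc dZ => p v.1 v.2.1 v.2.2)
    (hp_nonneg : ∀ x y z, 0 ≤ p x y z)
    (hiid : iIndepFun (fun i ω => (Xs i ω, Ys i ω, Zs i ω)) μ)
    (hlaw : ∀ i, μ.map (fun ω => (Xs i ω, Ys i ω, Zs i ω))
      = volume.withDensity fun v => ENNReal.ofReal (p v.1 v.2.1 v.2.2))
    (hA1 : A1 p)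
    (K : ℝ → ℝ) (hK1 : KernelAssumption K (dY + dZ)) (hK2 : KernelAssumption K dZ)
    (h1 h2 : ℕ → ℝ) (hA3 : BandwidthAssumption dY dZ h1 h2) :
    TendstoInMeasure μ
      (fun n ω => ustat K (h1 n) (h2 n) n Xs Ys Zs ω)
      atTop
      (fun _ => ∫ y, ∫ z, ballDiv (condAtYZ p y z) (condAtZ p z)
        * (margYZ p y z ^ 4 * margZ p z ^ 4) * margYZ p y z) := by
  obtain ⟨-, -, C, -, hYZ, -, -, -, -, hZ⟩ := hA1
  obtain ⟨hK0, ⟨M, hKM⟩, -, -, hK1, -⟩ := hK1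
  obtain ⟨h1_pos, h2_pos, -, nh1, nh2, nh1', nh2'⟩ := hA3
  exact ustat_consistent_general μ Xs Ys Zs hmeas p hp_meas hp_nonneg hiid hlaw hYZ hZ K hK0 hKM hK1
    hK2.2.2.2.2.1 h1 h2 h1_pos h2_pos (tendsto_nhds_zero_of_bandwidth h1_pos nh1 nh1')
    (tendsto_nhds_zero_of_bandwidth h2_pos nh2 nh2') nh1 nh2

end
end

section
/- Let Z₁, …, Z_n be i.i.d. random vectors with a bounded Lebesgue density p_Z on ℝ^{d_Z}, and let K: [0,∞) → [0,∞) be bounded, nonnegative, compactly supported, with ∫_{ℝ^{d_Z}} K(‖u‖)du = 1 and K(0) > 0. For a bandwidth h' > 0 define the normalized kernel weights κ_s(z) = K(‖z − Z_s‖/h') / Σ_{j=1}^n K(‖z − Z_j‖/h'), s = 1,…,n. If h' = h'(n) satisfies n^{2/d_Z} h'(n) → 0 as n → ∞ (i.e., h' = o(n^{−2/d_Z})), then ∏_{s=1}^n κ_s(Z_s) → 1 in probability as n → ∞. -/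
open MeasureTheory ProbabilityTheory Filter
open scoped ENNReal NNReal Topology

noncomputable section

/-!
If the points `Z_s` are pairwise at distance at least `R h`, where `K` vanishes on `[R, ∞)`, then
only the diagonal term survives in each denominator and the product of self-weights equals `1`.
For independent points whose laws give mass `O(r ^ d)` to balls of radius `r`, a fixed pair is at
distance less than `R h` with probability `O(h ^ d)`. A union bound over the at most `n ^ 2` pairs
bounds the probability that the product differs from `1` by a constant times
`n ^ 2 * h ^ d = (n ^ (2 / d) * h) ^ d`.
-/

section KernelWeight

variable {ι E : Type*} [PseudoMetricSpace E]

/-- The normalized kernel weight `κ_i` at the point `x`, for the kernel `K`, the bandwidth `h` and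
the sample `(z j)_{j ∈ I}`. It takes the junk value `0` where the denominator vanishes. -/
def kernelWeight (K : ℝ → ℝ) (h : ℝ) (I : Finset ι) (z : ι → E) (i : ι) (x : E) : ℝ :=
  K (dist x (z i) / h) / ∑ j ∈ I, K (dist x (z j) / h)

variable {K : ℝ → ℝ} {h R : ℝ} {I : Finset ι} {z : ι → E}

lemma kernelWeight_self_eq_one (hK0 : K 0 ≠ 0) {i : ι} (hi : i ∈ I)
    (hvanish : ∀ j ∈ I, j ≠ i → K (dist (z i) (z j) / h) = 0) :
    kernelWeight K h I z i (z i) = 1 := by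
  rw [kernelWeight, Finset.sum_eq_single_of_mem i hi hvanish, dist_self, zero_div, div_self hK0]

lemma prod_kernelWeight_self_eq_one (hK0 : K 0 ≠ 0) (hKR : ∀ t, R ≤ t → K t = 0) (hh : 0 < h)
    (hsep : (I : Set ι).Pairwise fun i j => R * h ≤ dist (z i) (z j)) :
    ∏ i ∈ I, kernelWeight K h I z i (z i) = 1 :=
  Finset.prod_eq_one fun _ hi => kernelWeight_self_eq_one hK0 hi fun _ hj hji =>
    hKR _ <| (le_div_iff₀ hh).2 <| hsep hi hj hji.symm

end KernelWeight

section Separation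

variable {Ω ι E : Type*} [MeasurableSpace Ω] {μ : Measure Ω} [IsProbabilityMeasure μ]
  [PseudoMetricSpace E] [SecondCountableTopology E] [MeasurableSpace E] [OpensMeasurableSpace E]
  {b : ℝ≥0∞}

lemma measure_dist_lt_le_of_indepFun {X Y : Ω → E} {r : ℝ}
    (hX : AEMeasurable X μ) (hY : AEMeasurable Y μ) (hXY : IndepFun X Y μ)
    (hball : ∀ x, μ.map Y (Metric.ball x r) ≤ b) :
    μ {ω | dist (X ω) (Y ω) < r} ≤ b := by
  have := Measure.isProbabilityMeasure_map hX
  have hS : MeasurableSet {p : E × E | dist p.1 p.2 < r} :=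
    measurableSet_lt measurable_dist measurable_const
  calc μ {ω | dist (X ω) (Y ω) < r}
      = μ.map (fun ω => (X ω, Y ω)) {p | dist p.1 p.2 < r} :=
        (Measure.map_apply_of_aemeasurable (hX.prodMk hY) hS).symm
    _ = ∫⁻ x, μ.map Y (Metric.ball x r) ∂μ.map X := by
        rw [hXY.map_prod_eq_prod_map_map hX hY, Measure.prod_apply hS]
        simp only [Set.preimage_ofPred_eq, dist_comm, Metric.ball]
    _ ≤ ∫⁻ _, b ∂μ.map X := lintegral_mono hball
    _ = b := by rw [lintegral_const, measure_univ, mul_one]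

lemma measure_not_pairwise_le_dist_le {I : Finset ι} {Z : ι → Ω → E} {r : ℝ}
    (hZ : ∀ i ∈ I, AEMeasurable (Z i) μ)
    (hindep : (I : Set ι).Pairwise fun i j => IndepFun (Z i) (Z j) μ)
    (hball : ∀ i ∈ I, ∀ x, μ.map (Z i) (Metric.ball x r) ≤ b) :
    μ {ω | ¬ (I : Set ι).Pairwise fun i j => r ≤ dist (Z i ω) (Z j ω)} ≤
      (I.card : ℝ≥0∞) ^ 2 * b := by
  classical
  have hcover : {ω | ¬ (I : Set ι).Pairwise fun i j => r ≤ dist (Z i ω) (Z j ω)} ⊆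
      ⋃ p ∈ I.offDiag, {ω | dist (Z p.1 ω) (Z p.2 ω) < r} := by
    intro ω hω
    simp only [Set.mem_ofPred_eq, Set.Pairwise, not_forall, not_le] at hω
    obtain ⟨i, hi, j, hj, hij, hlt⟩ := hω
    exact Set.mem_biUnion (Finset.mem_offDiag.2 ⟨hi, hj, hij⟩ : (i, j) ∈ I.offDiag) hlt
  have hpair : ∀ p ∈ I.offDiag, μ {ω | dist (Z p.1 ω) (Z p.2 ω) < r} ≤ b := by
    intro p hp
    obtain ⟨hi, hj, hij⟩ := Finset.mem_offDiag.1 hp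
    exact measure_dist_lt_le_of_indepFun (hZ _ hi) (hZ _ hj) (hindep hi hj hij) (hball _ hj)
  have hcard : I.offDiag.card ≤ I.card ^ 2 := by
    rw [Finset.offDiag_card, sq]
    exact Nat.sub_le _ _
  calc μ {ω | ¬ (I : Set ι).Pairwise fun i j => r ≤ dist (Z i ω) (Z j ω)}
      ≤ ∑ p ∈ I.offDiag, μ {ω | dist (Z p.1 ω) (Z p.2 ω) < r} :=
        (measure_mono hcover).trans (measure_biUnion_finset_le _ _)
    _ ≤ I.offDiag.card * b := by
        simpa only [nsmul_eq_mul] using Finset.sum_le_card_nsmul _ _ _ hpair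
    _ ≤ (I.card : ℝ≥0∞) ^ 2 * b := by
        gcongr
        exact_mod_cast hcard

lemma measure_prod_kernelWeight_self_ne_one_le {I : Finset ι} {Z : ι → Ω → E} {K : ℝ → ℝ}
    {h R : ℝ} (hZ : ∀ i ∈ I, AEMeasurable (Z i) μ)
    (hindep : (I : Set ι).Pairwise fun i j => IndepFun (Z i) (Z j) μ)
    (hball : ∀ i ∈ I, ∀ x, μ.map (Z i) (Metric.ball x (R * h)) ≤ b)
    (hK0 : K 0 ≠ 0) (hKR : ∀ t, R ≤ t → K t = 0) (hh : 0 < h) :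
    μ {ω | ∏ i ∈ I, kernelWeight K h I (fun j => Z j ω) i (Z i ω) ≠ 1} ≤
      (I.card : ℝ≥0∞) ^ 2 * b :=
  (measure_mono fun _ => mt <| prod_kernelWeight_self_eq_one hK0 hKR hh).trans <|
    measure_not_pairwise_le_dist_le hZ hindep hball

end Separation

lemma withDensity_ball_le_of_le {E : Type*} [NormedAddCommGroup E] [NormedSpace ℝ E]
    [FiniteDimensional ℝ E] [MeasurableSpace E] [BorelSpace E] {ν : Measure E}
    [ν.IsAddHaarMeasure] {f : E → ℝ≥0∞} {c : ℝ≥0∞} (hf : ∀ v, f v ≤ c) (x : E) {r : ℝ}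
    (hr : 0 < r) :
    ν.withDensity f (Metric.ball x r) ≤
      c * ν (Metric.ball 0 1) * ENNReal.ofReal (r ^ Module.finrank ℝ E) := by
  have hle : ν.withDensity f ≤ c • ν :=
    (withDensity_mono (ae_of_all _ hf)).trans_eq (withDensity_const c)
  calc ν.withDensity f (Metric.ball x r)
      ≤ c * ν (Metric.ball x r) := hle _
    _ = c * ν (Metric.ball 0 1) * ENNReal.ofReal (r ^ Module.finrank ℝ E) := by
        rw [Measure.addHaar_ball_of_pos ν x hr, mul_comm (ENNReal.ofReal _), mul_assoc]

lemma tendsto_sq_mul_rpow_of_tendsto_rpow_mul {d R : ℝ} (hd : 0 < d) (hR : 0 ≤ R) {h : ℕ → ℝ}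
    (hh : ∀ n, 0 ≤ h n)
    (hband : Tendsto (fun n : ℕ => (n : ℝ) ^ (2 / d) * h n) atTop (𝓝 0)) :
    Tendsto (fun n : ℕ => (n : ℝ) ^ 2 * (R * h n) ^ d) atTop (𝓝 0) := by
  have hfactor (n : ℕ) :
      R ^ d * ((n : ℝ) ^ (2 / d) * h n) ^ d = (n : ℝ) ^ 2 * (R * h n) ^ d := by
    rw [Real.mul_rpow (by positivity) (hh n), Real.mul_rpow hR (hh n),
      ← Real.rpow_mul n.cast_nonneg, div_mul_cancel₀ _ hd.ne', Real.rpow_two, mul_left_comm]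
  have hlim := (hband.rpow_const (Or.inr hd.le)).const_mul (R ^ d)
  rw [Real.zero_rpow hd.ne', mul_zero] at hlim
  exact hlim.congr hfactor

lemma tendstoInMeasure_of_tendsto_measure_ne {α ι E : Type*} [MeasurableSpace α]
    {μ : Measure α} [PseudoEMetricSpace E] {f : ι → α → E} {g : α → E} {l : Filter ι}
    (hne : Tendsto (fun i => μ {x | f i x ≠ g x}) l (𝓝 0)) : TendstoInMeasure μ f l g := by
  intro ε hε
  refine tendsto_of_tendsto_of_tendsto_of_le_of_le tendsto_const_nhds hne (fun _ => zero_le)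
    fun i => measure_mono fun x hx heq => ?_
  exact hε.not_ge (hx.trans_eq (by rw [heq, edist_self]))

theorem local_wild_bootstrap_weight_condition_general {Ω E : Type*} [MeasurableSpace Ω]
    {μ : Measure Ω} [IsProbabilityMeasure μ] [PseudoMetricSpace E] [SecondCountableTopology E]
    [MeasurableSpace E] [OpensMeasurableSpace E] {Z : ℕ → Ω → E}
    (hZ : ∀ i, AEMeasurable (Z i) μ) (hindep : Pairwise fun i j => IndepFun (Z i) (Z j) μ)
    {d : ℝ} (hd : 0 < d) {c : ℝ≥0∞} (hc : c ≠ ∞)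
    (hball : ∀ i x r, 0 < r → μ.map (Z i) (Metric.ball x r) ≤ c * ENNReal.ofReal (r ^ d))
    {K : ℝ → ℝ} (hK0 : K 0 ≠ 0) (hK : ∀ᶠ t in atTop, K t = 0)
    {h : ℕ → ℝ} (hh : ∀ n, 0 < h n)
    (hband : Tendsto (fun n : ℕ => (n : ℝ) ^ (2 / d) * h n) atTop (𝓝 0)) :
    TendstoInMeasure μ
      (fun n ω => ∏ s ∈ Finset.range n,
        kernelWeight K (h n) (Finset.range n) (fun j => Z j ω) s (Z s ω))
      atTop (fun _ => 1) := by
  obtain ⟨R, hR⟩ := ((eventually_gt_atTop (0 : ℝ)).and hK).exists_forall_of_atTop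
  have hRpos : 0 < R := (hR R le_rfl).1
  have hbound (n : ℕ) :
      μ {ω | ∏ s ∈ Finset.range n,
        kernelWeight K (h n) (Finset.range n) (fun j => Z j ω) s (Z s ω) ≠ 1} ≤
        c * ENNReal.ofReal ((n : ℝ) ^ 2 * (R * h n) ^ d) :=
    calc _ ≤ ((Finset.range n).card : ℝ≥0∞) ^ 2 * (c * ENNReal.ofReal ((R * h n) ^ d)) :=
          measure_prod_kernelWeight_self_ne_one_le (fun i _ => hZ i) (hindep.set_pairwise _)
            (fun i _ x => hball i x _ (mul_pos hRpos (hh n))) hK0 (fun t ht => (hR t ht).2) (hh n)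
      _ = c * ENNReal.ofReal ((n : ℝ) ^ 2 * (R * h n) ^ d) := by
          rw [Finset.card_range, ENNReal.ofReal_mul (by positivity),
            ENNReal.ofReal_pow n.cast_nonneg, ENNReal.ofReal_natCast, mul_left_comm]
  have hlim := ENNReal.Tendsto.const_mul (ENNReal.tendsto_ofReal <|
    tendsto_sq_mul_rpow_of_tendsto_rpow_mul hd hRpos.le (fun n => (hh n).le) hband) (Or.inr hc)
  rw [ENNReal.ofReal_zero, mul_zero] at hlim
  exact tendstoInMeasure_of_tendsto_measure_ne <|
    tendsto_of_tendsto_of_tendsto_of_le_of_le tendsto_const_nhds hlim (fun _ => zero_le) hbound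

/-- **weight-condition lemma for the local wild bootstrap.** For i.i.d. `Z₁, Z₂, …`
with a bounded Lebesgue density on `ℝ^{d_Z}` and a bounded, nonnegative, compactly supported
kernel `K` with `∫ K(‖u‖) du = 1` and `K(0) > 0`, if the bandwidth satisfies
`h' = o(n^{-2/d_Z})`, then the product of the normalized kernel self-weights
`∏_{s<n} κ_s(Z_s) = ∏_{s<n} K(‖Z_s - Z_s‖/h') / ∑_{j<n} K(‖Z_s - Z_j‖/h')` converges to `1` in
probability. -/
theorem local_wild_bootstrap_weight_condition
    {dZ : ℕ} (hdZ : 0 < dZ) {Ω : Type} [MeasurableSpace Ω]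
    (μ : Measure Ω) [IsProbabilityMeasure μ]
    (Zs : ℕ → Ω → Euc dZ) (hmeas : ∀ i, Measurable (Zs i))
    (pZ : Euc dZ → ℝ) (hpZ_meas : Measurable pZ) (hpZ_nonneg : ∀ v, 0 ≤ pZ v)
    (hpZ_bdd : ∃ C : ℝ, ∀ v, pZ v ≤ C)
    (hiid : iIndepFun Zs μ)
    (hlaw : ∀ i, μ.map (Zs i) = volume.withDensity fun v => ENNReal.ofReal (pZ v))
    (K : ℝ → ℝ) (hK_nonneg : ∀ t, 0 ≤ K t) (hK_bdd : ∃ C : ℝ, ∀ t, K t ≤ C)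
    (hK_compact : ∃ R : ℝ, 0 < R ∧ ∀ t : ℝ, R < |t| → K t = 0)
    (hK_int : (∫ u : Euc dZ, K ‖u‖) = 1) (hK0 : 0 < K 0)
    (h' : ℕ → ℝ) (h'_pos : ∀ n, 0 < h' n)
    (hband : Tendsto (fun n : ℕ => (n : ℝ) ^ ((2 : ℝ) / dZ) * h' n) atTop (𝓝 0)) :
    TendstoInMeasure μ
      (fun n ω => ∏ s ∈ Finset.range n,
        (K (dist (Zs s ω) (Zs s ω) / h' n) /
          ∑ j ∈ Finset.range n, K (dist (Zs s ω) (Zs j ω) / h' n)))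
      atTop (fun _ => 1) := by
  obtain ⟨C, hC⟩ := hpZ_bdd
  obtain ⟨R, -, hR⟩ := hK_compact
  have hball (i : ℕ) (x : Euc dZ) (r : ℝ) (hr : 0 < r) :
      μ.map (Zs i) (Metric.ball x r) ≤
        ENNReal.ofReal C * volume (Metric.ball (0 : Euc dZ) 1) *
          ENNReal.ofReal (r ^ (dZ : ℝ)) := by
    simpa only [hlaw i, finrank_euclideanSpace_fin, Real.rpow_natCast] using
      withDensity_ball_le_of_le (fun v => ENNReal.ofReal_le_ofReal (hC v)) x hr
  have hK : ∀ᶠ t in atTop, K t = 0 :=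
    (eventually_gt_atTop R).mono fun t ht => hR t (ht.trans_le (le_abs_self t))
  exact local_wild_bootstrap_weight_condition_general (fun i => (hmeas i).aemeasurable)
    (fun _ _ hij => hiid.indepFun hij) (Nat.cast_pos.2 hdZ)
    (ENNReal.mul_ne_top ENNReal.ofReal_ne_top measure_ball_lt_top.ne) hball hK0.ne' hK h'_pos
    hband

end
end
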